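/- arXiv:1707.05581 — 3 statements merged into one kernel-verified Lean document; each statement's English description precedes it below -/
import Mathlib

section
/- Let X be a geodesic metric space and A a subset of X of infinite diameter. Then A is a Morse subset of X if and only if the lower relative divergence div(X,A) of X with respect to A is completely super linear. -/
/-!
# Morse subsets and lower relative divergence

Write the height of a point for its distance to `A`.

**Morse implies completely super linear** (with `n₀ = 4`). Suppose `σ^4_ρ(r) ≤ C r`: two points
`x`, `y` of height `r`, at distance at least `4 r`, are joined by a path of length about `C r`
staying at height at least `ρ r`. Consider chains with steps of length at most `1`, charging an
integer `W ≥ C + 3` for each step from a point of height less than `R = ρ r / 2` and `1` for every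
other step. A cheapest chain between two points is a `(W, 3)`-quasi-geodesic, since its number of
steps is at most its cost, which is at most `W` times the distance up to a constant
(`qiEmbedOn_optimal_chain`). Take a cheapest chain between almost nearest points `x'`, `y'` of `A`
to `x`, `y`. Going through `x` and `y` costs at most about `(2 R) W + (C + 2) r`, whereas a chain
remaining at height less than `R` costs at least about `2 r W`. Hence for large `r` the cheapest
chain reaches height `ρ r / 2`, and the Morse property bounds `r`.

**Completely super linear implies Morse**, using only `ρ = 1`. Sample a quasi-geodesic at unit
times and look at an excursion to large height. Its length is large compared with the heights at
its ends, and an induction on the length (`exists_scale`) finds a scale `r` and a subinterval of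
length comparable to a large multiple of `r`, of height at least `2 r` throughout and of height at
most about `32 r` at both ends. Descending from the two ends to height exactly `r`
(`exists_descent`) yields points at distance at least `n₀ r` joined outside the `r`-neighbourhood
of `A` by a path of length at most `Λ r`, with `Λ` depending only on the quasi-geodesic constants
and `n₀`; so `r` is bounded, and therefore so is the height of the excursion.
-/

open Metric Set Pointwise
open scoped ENNReal

noncomputable section

/-- The `(K,C)`-quasi-isometric-embedding inequalities for a map `γ : ℝ → X`
restricted to a subset `s ⊆ ℝ`; for `s` an interval this is the notion of a
`(K,C)`-quasi-geodesic. -/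
def QIEmbedOn {X : Type*} [MetricSpace X] (γ : ℝ → X) (s : Set ℝ) (K C : ℝ) : Prop :=
  ∀ a ∈ s, ∀ b ∈ s,
    (1 / K) * |a - b| - C ≤ dist (γ a) (γ b) ∧ dist (γ a) (γ b) ≤ K * |a - b| + C

/-- `Φ` is a `(K,L)`-quasi-isometric embedding. -/
def QIEmbeddingWith {A X : Type*} [MetricSpace A] [MetricSpace X] (Φ : A → X)
    (K L : ℝ) : Prop :=
  1 ≤ K ∧ 0 ≤ L ∧ ∀ a b : A,
    (1 / K) * dist a b - L ≤ dist (Φ a) (Φ b) ∧ dist (Φ a) (Φ b) ≤ K * dist a b + L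

/-- `Φ` is a quasi-isometric embedding. -/
def IsQIEmbedding {A X : Type*} [MetricSpace A] [MetricSpace X] (Φ : A → X) : Prop :=
  ∃ K L : ℝ, QIEmbeddingWith Φ K L

/-- A metric space is geodesic if every pair of points is joined by an isometrically
parametrized segment. -/
def IsGeodesicSpace (X : Type*) [MetricSpace X] : Prop :=
  ∀ x y : X, ∃ γ : ℝ → X, γ 0 = x ∧ γ (dist x y) = y ∧
    ∀ s ∈ Icc (0 : ℝ) (dist x y), ∀ t ∈ Icc (0 : ℝ) (dist x y), dist (γ s) (γ t) = |s - t|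

/-- A subset `A` is Morse: every `(K,C)`-quasi-geodesic with endpoints on `A` stays in a
uniform `M = M(K,C)` neighborhood of `A`. -/
def IsMorse {X : Type*} [MetricSpace X] (A : Set X) : Prop :=
  ∀ K C : ℝ, 1 ≤ K → 0 ≤ C → ∃ M : ℝ, 0 ≤ M ∧
    ∀ (γ : ℝ → X) (a b : ℝ), a ≤ b → QIEmbedOn γ (Icc a b) K C →
      γ a ∈ A → γ b ∈ A → ∀ t ∈ Icc a b, infDist (γ t) A ≤ M

/-- `A` is Morse with the specific Morse gauge `N`. -/
def MorseWithGauge {X : Type*} [MetricSpace X] (A : Set X) (N : ℝ → ℝ → ℝ) : Prop :=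
  ∀ K C : ℝ, 1 ≤ K → 0 ≤ C →
    ∀ (γ : ℝ → X) (a b : ℝ), a ≤ b → QIEmbedOn γ (Icc a b) K C →
      γ a ∈ A → γ b ∈ A → ∀ t ∈ Icc a b, infDist (γ t) A ≤ N K C

/-- A subset `A ⊆ X` is stable: any two `(K,L)`-quasi-geodesics with the same endpoints
on `A` are at uniformly bounded Hausdorff distance `R = R(K,L)`. -/
def IsStableSubset {X : Type*} [MetricSpace X] (A : Set X) : Prop :=
  ∀ K L : ℝ, 1 ≤ K → 0 ≤ L → ∃ R : ℝ, 0 ≤ R ∧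
    ∀ (γ γ' : ℝ → X) (a b a' b' : ℝ), a ≤ b → a' ≤ b' →
      QIEmbedOn γ (Icc a b) K L → QIEmbedOn γ' (Icc a' b') K L →
      γ a = γ' a' → γ b = γ' b' → γ a ∈ A → γ b ∈ A →
      hausdorffDist (γ '' Icc a b) (γ' '' Icc a' b') < R

/-- `s` is (the image of) a geodesic segment from `x` to `y`. -/
def IsGeodesicSegment {X : Type*} [MetricSpace X] (s : Set X) (x y : X) : Prop :=
  ∃ γ : ℝ → X, γ 0 = x ∧ γ (dist x y) = y ∧ s = γ '' Icc 0 (dist x y) ∧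
    ∀ u ∈ Icc (0 : ℝ) (dist x y), ∀ v ∈ Icc (0 : ℝ) (dist x y), dist (γ u) (γ v) = |u - v|

/-- `X` is (Gromov) hyperbolic: there is `δ ≥ 0` such that every geodesic triangle is
`δ`-thin (each side lies in the `δ`-neighborhood of the union of the other two sides). -/
def IsHyperbolic (X : Type*) [MetricSpace X] : Prop :=
  ∃ δ : ℝ, 0 ≤ δ ∧ ∀ x y z : X, ∀ s₁ s₂ s₃ : Set X,
    IsGeodesicSegment s₁ x y → IsGeodesicSegment s₂ y z → IsGeodesicSegment s₃ x z →
    ∀ p ∈ s₃, infDist p (s₁ ∪ s₂) ≤ δ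

/-- The induced length (pseudo)distance `d_r(x,y)` on the complement of the open
`r`-neighborhood of `A`: the infimum of lengths of paths from `x` to `y` staying at
distance at least `r` from `A` (with value `∞` if there is no such path). -/
def relPathDist {X : Type*} [MetricSpace X] (A : Set X) (r : ℝ) (x y : X) : ℝ≥0∞ :=
  ⨅ (γ : ℝ → X) (a : ℝ) (b : ℝ) (_ : a ≤ b) (_ : ContinuousOn γ (Icc a b))
    (_ : γ a = x) (_ : γ b = y) (_ : ∀ t ∈ Icc a b, r ≤ infDist (γ t) A),
    eVariationOn γ (Icc a b)

/-- The lower relative divergence `σ^n_ρ(r)` of `X` with respect to `A`: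
the infimum of `d_{ρr}(x,y)` over `x, y ∈ ∂N_r(A)` with `d_r(x,y) < ∞` and
`d(x,y) ≥ n r` (and `∞` if there is no such pair). -/
def lowerRelDiv {X : Type*} [MetricSpace X] (A : Set X) (n : ℕ) (ρ r : ℝ) : ℝ≥0∞ :=
  ⨅ (x : X) (y : X) (_ : infDist x A = r) (_ : infDist y A = r)
    (_ : relPathDist A r x y ≠ ⊤) (_ : (n : ℝ) * r ≤ dist x y),
    relPathDist A (ρ * r) x y

/-- `f : [0,∞) → [0,∞]` is completely super linear: for each `C > 0` the set of `x ≥ 0`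
with `f x ≤ C x` is bounded. -/
def CompletelySuperLinear (f : ℝ → ℝ≥0∞) : Prop :=
  ∀ C : ℝ, 0 < C → ∃ B : ℝ, ∀ x : ℝ, 0 ≤ x → f x ≤ ENNReal.ofReal (C * x) → x ≤ B

/-- A family `{σ^n_ρ}` is completely super linear if there is `n₀ ≥ 3` such that
`σ^{n₀}_ρ` is completely super linear for every `ρ ∈ (0,1]`. -/
def FamilyCSL (σ : ℕ → ℝ → ℝ → ℝ≥0∞) : Prop :=
  ∃ n₀ : ℕ, 3 ≤ n₀ ∧ ∀ ρ : ℝ, 0 < ρ → ρ ≤ 1 → CompletelySuperLinear (σ n₀ ρ)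

/-- `f` is dominated by `g` : `f(x) ≤ A g(Bx) + Cx` for all `x > D`. -/
def FunDominatedBy (f g : ℝ → ℝ≥0∞) : Prop :=
  ∃ A B C D : ℝ, 0 < A ∧ 0 < B ∧ 0 < C ∧ 0 < D ∧
    ∀ x : ℝ, D < x → f x ≤ ENNReal.ofReal A * g (B * x) + ENNReal.ofReal (C * x)

/-- The quadratic function `r ↦ r²` viewed in `[0,∞]`. -/
def quadFun : ℝ → ℝ≥0∞ := fun r => ENNReal.ofReal (r ^ 2)

/-- The family `{σ^n_ρ}` dominates the function `f` (i.e. the constant family `f` is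
dominated by `{σ^n_ρ}`): there are `L ∈ (0,1]` and a positive integer `M` such that
`f ≼ σ^{Mn}_ρ` for all `n ≥ 2`, `ρ ∈ (0,1]`. -/
def FamilyDominatesFun (σ : ℕ → ℝ → ℝ → ℝ≥0∞) (f : ℝ → ℝ≥0∞) : Prop :=
  ∃ (L : ℝ) (M : ℕ), 0 < L ∧ L ≤ 1 ∧ 0 < M ∧
    ∀ n : ℕ, 2 ≤ n → ∀ ρ : ℝ, 0 < ρ → ρ ≤ 1 → FunDominatedBy f (σ (M * n) ρ)

/-- The family `{σ^n_ρ}` is dominated by the function `f`: there are `L ∈ (0,1]` and a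
positive integer `M` such that `σ^n_{Lρ} ≼ f` for all `n ≥ 2`, `ρ ∈ (0,1]`. -/
def FamilyDominatedByFun (σ : ℕ → ℝ → ℝ → ℝ≥0∞) (f : ℝ → ℝ≥0∞) : Prop :=
  ∃ (L : ℝ) (M : ℕ), 0 < L ∧ L ≤ 1 ∧ 0 < M ∧
    ∀ n : ℕ, 2 ≤ n → ∀ ρ : ℝ, 0 < ρ → ρ ≤ 1 → FunDominatedBy (σ n (L * ρ)) f

/-- The family is at least quadratic. -/
def FamilyAtLeastQuadratic (σ : ℕ → ℝ → ℝ → ℝ≥0∞) : Prop :=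
  FamilyDominatesFun σ quadFun

/-- The family is (exactly) quadratic. -/
def FamilyQuadratic (σ : ℕ → ℝ → ℝ → ℝ≥0∞) : Prop :=
  FamilyDominatesFun σ quadFun ∧ FamilyDominatedByFun σ quadFun

/-- Word length of `g` with respect to a generating set `S` (letters from `S ∪ S⁻¹`). -/
def wordLength {G : Type*} [Group G] (S : Set G) (g : G) : ℕ :=
  sInf {n : ℕ | ∃ w : List G, w.length = n ∧ (∀ x ∈ w, x ∈ S ∨ x⁻¹ ∈ S) ∧ w.prod = g}

/-- The word metric on `G` with respect to `S`. -/
def wordDist {G : Type*} [Group G] (S : Set G) (g h : G) : ℝ :=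
  (wordLength S (g⁻¹ * h) : ℝ)

/-- The distance `d_S(g, A)` from `g` to a subset `A ⊆ G` in the word metric. -/
def wordDistToSet {G : Type*} [Group G] (S : Set G) (g : G) (A : Set G) : ℕ :=
  sInf {n : ℕ | ∃ a ∈ A, wordLength S (g⁻¹ * a) = n}

/-- `X`, together with the vertex map `ι : G → X`, is a geometric model for the Cayley
graph `Γ(G,S)`: `X` is geodesic, `ι` realizes the word metric on the vertex set, and every
point of `X` is within `1/2` of a vertex (as in the unit-edge-length Cayley graph). -/
def CayleyModel (G : Type*) [Group G] (S : Set G) (X : Type*) [MetricSpace X]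
    (ι : G → X) : Prop :=
  IsGeodesicSpace X ∧ (∀ g h : G, dist (ι g) (ι h) = wordDist S g h) ∧
    ∀ x : X, ∃ g : G, dist x (ι g) ≤ 1 / 2

/-- `H ≤ G` is strongly quasiconvex: `H` is a Morse subset of the Cayley graph of `G`
with respect to some (equivalently, any) finite generating set. -/
def StronglyQuasiconvex {G : Type*} [Group G] (H : Subgroup G) : Prop :=
  ∀ S : Set G, S.Finite → Subgroup.closure S = ⊤ →
    ∀ (X : Type) [MetricSpace X], ∀ ι : G → X, CayleyModel G S X ι →
      IsMorse (ι '' (H : Set G))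

/-- `H` is a finitely generated undistorted subgroup of `G` (with respect to the word
metric of the finite generating set `S` of `G`): the inclusion `(H,d_T) → (G,d_S)` is a
quasi-isometric embedding for some finite generating set `T` of `H`. -/
def Undistorted {G : Type*} [Group G] (S : Set G) (H : Subgroup G) : Prop :=
  ∃ T : Set H, T.Finite ∧ Subgroup.closure T = ⊤ ∧
    ∃ K L : ℝ, 1 ≤ K ∧ 0 ≤ L ∧ ∀ h₁ h₂ : H,
      (1 / K) * wordDist T h₁ h₂ - L ≤ wordDist S (h₁ : G) (h₂ : G) ∧
      wordDist S (h₁ : G) (h₂ : G) ≤ K * wordDist T h₁ h₂ + L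

/-- `H` is a stable subgroup of `G`: `H` is finitely generated and undistorted, and its
image in (a model `X` of) the Cayley graph `Γ(G,S)` is a stable subset. -/
def StableIn {G : Type*} [Group G] (S : Set G) (H : Subgroup G) (X : Type*)
    [MetricSpace X] (ι : G → X) : Prop :=
  Undistorted S H ∧ IsStableSubset (ι '' (H : Set G))

/-- A group is hyperbolic if its Cayley graph with respect to some (equivalently, any)
finite generating set is a hyperbolic geodesic space. -/
def IsHyperbolicGroup (H : Type*) [Group H] : Prop :=
  ∀ T : Set H, T.Finite → Subgroup.closure T = ⊤ →
    ∀ (Y : Type) [MetricSpace Y], ∀ ι : H → Y, CayleyModel H T Y ι → IsHyperbolic Y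

/-- A geodesic ray in `X` (isometric embedding of `[0,∞)`). -/
def IsGeodesicRay {X : Type*} [MetricSpace X] (γ : ℝ → X) : Prop :=
  ∀ s ∈ Ici (0 : ℝ), ∀ t ∈ Ici (0 : ℝ), dist (γ s) (γ t) = |s - t|

/-- `γ` restricted to `[a,b]` is a geodesic (isometric parametrization). -/
def IsGeodesicOn {X : Type*} [MetricSpace X] (γ : ℝ → X) (a b : ℝ) : Prop :=
  ∀ s ∈ Icc a b, ∀ t ∈ Icc a b, dist (γ s) (γ t) = |s - t|

/-- `γ` is parametrized by arc length on `[a,b]`. -/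
def ArcLengthParamOn {X : Type*} [MetricSpace X] (γ : ℝ → X) (a b : ℝ) : Prop :=
  ∀ s t : ℝ, a ≤ s → s ≤ t → t ≤ b → eVariationOn γ (Icc s t) = ENNReal.ofReal (t - s)

/-- Relations of a right-angled Coxeter group on a simplicial graph `Γ`. -/
def racgRels {V : Type} (Γ : SimpleGraph V) : Set (FreeGroup V) :=
  {rel | (∃ v : V, rel = FreeGroup.of v * FreeGroup.of v) ∨
    (∃ v w : V, Γ.Adj v w ∧
      rel = FreeGroup.of v * FreeGroup.of w * (FreeGroup.of v)⁻¹ * (FreeGroup.of w)⁻¹)}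

/-- The right-angled Coxeter group associated to a finite simplicial graph `Γ`. -/
abbrev RACG {V : Type} (Γ : SimpleGraph V) : Type := PresentedGroup (racgRels Γ)

/-- The standard generator of `RACG Γ` corresponding to a vertex. -/
def racgGen {V : Type} (Γ : SimpleGraph V) (v : V) : RACG Γ := PresentedGroup.of v

/-- Relations of a right-angled Artin group on a simplicial graph `Γ`. -/
def raagRels {V : Type} (Γ : SimpleGraph V) : Set (FreeGroup V) :=
  {rel | ∃ v w : V, Γ.Adj v w ∧
    rel = FreeGroup.of v * FreeGroup.of w * (FreeGroup.of v)⁻¹ * (FreeGroup.of w)⁻¹}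

/-- The right-angled Artin group associated to a finite simplicial graph `Γ`. -/
abbrev RAAG {V : Type} (Γ : SimpleGraph V) : Type := PresentedGroup (raagRels Γ)

/-- The standard generator of `RAAG Γ` corresponding to a vertex. -/
def raagGen {V : Type} (Γ : SimpleGraph V) (v : V) : RAAG Γ := PresentedGroup.of v

/-- `a b c d` (in this cyclic order) form an induced `4`-cycle of `Γ`. -/
def InducedFourCycle {V : Type} (Γ : SimpleGraph V) (a b c d : V) : Prop :=
  a ≠ b ∧ a ≠ c ∧ a ≠ d ∧ b ≠ c ∧ b ≠ d ∧ c ≠ d ∧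
  Γ.Adj a b ∧ Γ.Adj b c ∧ Γ.Adj c d ∧ Γ.Adj d a ∧ ¬ Γ.Adj a c ∧ ¬ Γ.Adj b d

/-! ### Geodesics and the path distance `d_r` -/

section PathDistance

variable {X : Type*} [MetricSpace X] {A : Set X}

lemma IsGeodesicOn.mono {γ : ℝ → X} {a b s t : ℝ} (h : IsGeodesicOn γ a b) (hs : a ≤ s)
    (ht : t ≤ b) : IsGeodesicOn γ s t := fun u hu v hv =>
  h u ⟨hs.trans hu.1, hu.2.trans ht⟩ v ⟨hs.trans hv.1, hv.2.trans ht⟩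

lemma IsGeodesicOn.lipschitzOnWith {γ : ℝ → X} {a b : ℝ} (h : IsGeodesicOn γ a b) :
    LipschitzOnWith 1 γ (Icc a b) :=
  LipschitzOnWith.of_dist_le_mul fun x hx y hy => by
    rw [h x hx y hy, NNReal.coe_one, one_mul, Real.dist_eq]

lemma IsGeodesicOn.continuousOn {γ : ℝ → X} {a b : ℝ} (h : IsGeodesicOn γ a b) :
    ContinuousOn γ (Icc a b) := h.lipschitzOnWith.continuousOn

lemma IsGeodesicOn.eVariationOn_le {γ : ℝ → X} {a b : ℝ} (h : IsGeodesicOn γ a b) :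
    eVariationOn γ (Icc a b) ≤ ENNReal.ofReal (b - a) := by
  have := h.lipschitzOnWith.comp_eVariationOn_le (g := id) (mapsTo_id _)
  simpa using this

lemma relPathDist_le {r : ℝ} {γ : ℝ → X} {a b : ℝ} (hab : a ≤ b)
    (hc : ContinuousOn γ (Icc a b)) (hr : ∀ t ∈ Icc a b, r ≤ infDist (γ t) A) :
    relPathDist A r (γ a) (γ b) ≤ eVariationOn γ (Icc a b) :=
  iInf_le_of_le γ <| iInf_le_of_le a <| iInf_le_of_le b <| iInf_le_of_le hab <|
    iInf_le_of_le hc <| iInf_le_of_le rfl <| iInf_le_of_le rfl <| iInf_le_of_le hr le_rfl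

lemma exists_path_of_relPathDist_lt {r : ℝ} {x y : X} {c : ℝ≥0∞} (h : relPathDist A r x y < c) :
    ∃ (γ : ℝ → X) (a b : ℝ), a ≤ b ∧ ContinuousOn γ (Icc a b) ∧ γ a = x ∧ γ b = y ∧
      (∀ t ∈ Icc a b, r ≤ infDist (γ t) A) ∧ eVariationOn γ (Icc a b) < c := by
  simp only [relPathDist, iInf_lt_iff] at h
  obtain ⟨γ, a, b, h1, h2, h3, h4, h5, h6⟩ := h
  exact ⟨γ, a, b, h1, h2, h3, h4, h5, h6⟩

lemma relPathDist_comm_le (r : ℝ) (x y : X) : relPathDist A r x y ≤ relPathDist A r y x := by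
  refine le_of_forall_gt fun c hc => ?_
  obtain ⟨γ, a, b, hab, hcont, rfl, rfl, hr, hl⟩ := exists_path_of_relPathDist_lt hc
  have hmaps : MapsTo (fun t : ℝ => -t) (Icc (-b) (-a)) (Icc a b) := fun t ht =>
    ⟨by linarith [ht.2], by linarith [ht.1]⟩
  have h := relPathDist_le (A := A) (r := r) (γ := γ ∘ fun t => -t) (neg_le_neg hab)
    (hcont.comp continuous_neg.continuousOn hmaps) (fun t ht => hr _ (hmaps ht))
  simp only [Function.comp_apply, neg_neg] at h
  exact (h.trans (eVariationOn.comp_le_of_antitoneOn γ _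
    (fun s _ t _ hst => neg_le_neg hst) hmaps)).trans_lt hl

lemma relPathDist_triangle (r : ℝ) (x y z : X) :
    relPathDist A r x z ≤ relPathDist A r x y + relPathDist A r y z := by
  by_cases h1 : relPathDist A r x y = ⊤
  · simp [h1]
  by_cases h2 : relPathDist A r y z = ⊤
  · simp [h2]
  refine ENNReal.le_of_forall_pos_le_add fun ε hε _ => ?_
  have hε2 : (0 : ℝ≥0∞) < (ε / 2 : NNReal) := by
    exact_mod_cast half_pos hε
  obtain ⟨γ, a, b, hab, hc, rfl, hb, hr, hl⟩ :=
    exists_path_of_relPathDist_lt (ENNReal.lt_add_right h1 hε2.ne')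
  obtain ⟨γ', a', b', hab', hc', ha', rfl, hr', hl'⟩ :=
    exists_path_of_relPathDist_lt (ENNReal.lt_add_right h2 (ne_of_gt hε2))
  -- the second path, translated so as to start at parameter `b`
  set δ : ℝ → X := fun t => γ' (t - b + a') with hδ
  have hmaps : MapsTo (fun t : ℝ => t - b + a') (Icc b (b + (b' - a'))) (Icc a' b') :=
    fun t ht => ⟨by linarith [ht.1], by linarith [ht.2]⟩
  have hδc : ContinuousOn δ (Icc b (b + (b' - a'))) :=
    hc'.comp (by fun_prop) hmaps
  have hδb : δ b = γ b := by simp [hδ, ha', hb]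
  set c := b + (b' - a') with hcdef
  have hbc : b ≤ c := by linarith
  set η : ℝ → X := fun t => if t ≤ b then γ t else δ t with hη
  have e1 : EqOn η γ (Icc a b) := fun t ht => by simp [hη, ht.2]
  have e2 : EqOn η δ (Icc b c) := fun t ht => by
    rcases ht.1.eq_or_lt with h | h
    · subst h; simp [hη, hδb]
    · simp [hη, not_le.2 h]
  have hηc : ContinuousOn η (Icc a c) := by
    rw [← Icc_union_Icc_eq_Icc hab hbc]
    exact (hc.congr e1).union_of_isClosed (hδc.congr e2) isClosed_Icc isClosed_Icc
  have hηr : ∀ t ∈ Icc a c, r ≤ infDist (η t) A := fun t ht => by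
    rcases le_total t b with h | h
    · rw [e1 ⟨ht.1, h⟩]; exact hr _ ⟨ht.1, h⟩
    · rw [e2 ⟨h, ht.2⟩]; exact hr' _ (hmaps ⟨h, ht.2⟩)
  have hle := relPathDist_le (A := A) (hab.trans hbc) hηc hηr
  rw [e1 ⟨le_rfl, hab⟩, e2 ⟨hbc, le_rfl⟩] at hle
  have hend : δ c = γ' b' := by simp [hδ, hcdef]
  rw [hend] at hle
  have hv := eVariationOn.Icc_add_Icc η (s := univ) hab hbc (mem_univ b)
  simp only [univ_inter] at hv
  rw [← hv, eVariationOn.congr e1, eVariationOn.congr e2] at hle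
  have hv2 : eVariationOn δ (Icc b c) ≤ eVariationOn γ' (Icc a' b') :=
    eVariationOn.comp_le_of_monotoneOn γ' _ (fun s _ t _ hst => by
      change s - b + a' ≤ t - b + a'; linarith) hmaps
  have hsum : (ε : ℝ≥0∞) = (ε / 2 : NNReal) + (ε / 2 : NNReal) := by
    rw [← ENNReal.coe_add, add_halves]
  calc _ ≤ _ := hle
    _ ≤ (relPathDist A r (γ a) y + (ε / 2 : NNReal)) +
        (relPathDist A r y (γ' b') + (ε / 2 : NNReal)) :=
      add_le_add hl.le (hv2.trans hl'.le)
    _ = _ := by rw [hsum]; ring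

lemma IsGeodesicOn.relPathDist_le {r : ℝ} {γ : ℝ → X} {a b : ℝ} (hab : a ≤ b)
    (h : IsGeodesicOn γ a b) (hr : ∀ t ∈ Icc a b, r ≤ infDist (γ t) A) :
    relPathDist A r (γ a) (γ b) ≤ ENNReal.ofReal (b - a) :=
  (_root_.relPathDist_le hab h.continuousOn hr).trans h.eVariationOn_le

lemma IsGeodesicSpace.exists_geodesic (hX : IsGeodesicSpace X) (x y : X) :
    ∃ γ : ℝ → X, γ 0 = x ∧ γ (dist x y) = y ∧ IsGeodesicOn γ 0 (dist x y) := hX x y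

lemma relPathDist_le_of_add_dist_le (hX : IsGeodesicSpace X) {r : ℝ} {x y : X}
    (h : r + dist x y ≤ infDist x A) : relPathDist A r x y ≤ ENNReal.ofReal (dist x y) := by
  obtain ⟨γ, h0, h1, hg⟩ := hX.exists_geodesic x y
  have := hg.relPathDist_le (A := A) (r := r) dist_nonneg (fun t ht => by
    have e := hg 0 ⟨le_rfl, dist_nonneg⟩ t ht
    rw [h0, zero_sub, abs_neg, abs_of_nonneg ht.1] at e
    have := infDist_le_infDist_add_dist (s := A) (x := x) (y := γ t)
    linarith [ht.2])
  simpa [h0, h1] using this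

/-- A point `x` of height `h ≥ r` above `A` can be joined, outside the `r`-neighbourhood of `A`,
to a point of height exactly `r` by a path of length at most `h + 1`: descend along a geodesic
towards an almost nearest point of `A` until the last parameter of height `r`. -/
lemma exists_descent (hX : IsGeodesicSpace X) (hA : A.Nonempty) {r : ℝ} (hr : 0 ≤ r) {x : X}
    (hx : r ≤ infDist x A) :
    ∃ x' : X, infDist x' A = r ∧ dist x' x ≤ infDist x A + 1 ∧
      relPathDist A r x' x ≤ ENNReal.ofReal (infDist x A + 1) := by
  obtain ⟨a, haA, ha⟩ := (infDist_lt_iff hA).1 (lt_add_one (infDist x A))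
  obtain ⟨γ, h0, h1, hg⟩ := hX.exists_geodesic a x
  rw [dist_comm] at ha
  set d := dist a x
  have hd : 0 ≤ d := dist_nonneg
  have hfc : ContinuousOn (fun t => infDist (γ t) A) (Icc 0 d) :=
    (continuous_infDist_pt A).comp_continuousOn hg.continuousOn
  set S : Set ℝ := Icc 0 d ∩ (fun t => infDist (γ t) A) ⁻¹' {r}
  have hScl : IsClosed S := hfc.preimage_isClosed_of_isClosed isClosed_Icc isClosed_singleton
  have hSc : IsCompact S := isCompact_Icc.of_isClosed_subset hScl inter_subset_left
  have hSne : S.Nonempty := by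
    obtain ⟨t, ht, hte⟩ := intermediate_value_Icc hd hfc
      (show r ∈ Icc _ _ by
        refine ⟨?_, ?_⟩
        · simpa [h0, infDist_zero_of_mem haA] using hr
        · simpa [h1] using hx)
    exact ⟨t, ht, hte⟩
  obtain ⟨s, ⟨hs, hsr⟩, hmax⟩ := hSc.exists_isGreatest hSne
  have hheight : ∀ t ∈ Icc s d, r ≤ infDist (γ t) A := by
    intro t ht
    by_contra! hlt
    obtain ⟨u, hu, hue⟩ := intermediate_value_Icc ht.2
      (hfc.mono (Icc_subset_Icc_left (hs.1.trans ht.1)))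
      (show r ∈ Icc _ _ from ⟨hlt.le, by simpa [h1] using hx⟩)
    have hus : u ≤ s := hmax ⟨⟨(hs.1.trans ht.1).trans hu.1, hu.2⟩, hue⟩
    have : t = s := le_antisymm (hu.1.trans hus) ht.1
    rw [this, show infDist (γ s) A = r from hsr] at hlt
    exact lt_irrefl _ hlt
  have hg' := hg.mono hs.1 le_rfl
  refine ⟨γ s, hsr, ?_, ?_⟩
  · have := hg' s ⟨le_rfl, hs.2⟩ d ⟨hs.2, le_rfl⟩
    rw [h1, abs_sub_comm, abs_of_nonneg (by linarith [hs.2])] at this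
    linarith [hs.1]
  · have := hg'.relPathDist_le hs.2 hheight
    rw [h1] at this
    exact this.trans (ENNReal.ofReal_le_ofReal (by linarith [hs.1]))

/-- Joining consecutive points of a chain by geodesics. -/
lemma relPathDist_chain_le (hX : IsGeodesicSpace X) {r κ : ℝ} (hκ : 0 ≤ κ) {p : ℕ → X} {i : ℕ}
    {n : ℕ} (hstep : ∀ k, dist (p k) (p (k + 1)) ≤ κ)
    (hh : ∀ k, i ≤ k → k ≤ i + n → r + κ ≤ infDist (p k) A) :
    relPathDist A r (p i) (p (i + n)) ≤ ENNReal.ofReal (κ * n) := by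
  induction n with
  | zero =>
    have := relPathDist_le_of_add_dist_le hX (A := A) (r := r) (x := p i) (y := p i) (by
      rw [dist_self]; linarith [hh i le_rfl le_rfl])
    simpa using this
  | succ n ih =>
    have h1 := ih fun k hk hk' => hh k hk (by omega)
    have h2 := relPathDist_le_of_add_dist_le hX (A := A) (r := r) (x := p (i + n))
      (y := p (i + n + 1)) (by
        linarith [hh (i + n) (by omega) (by omega), hstep (i + n)])
    calc _ ≤ _ := relPathDist_triangle r _ (p (i + n)) _
      _ ≤ ENNReal.ofReal (κ * n) + ENNReal.ofReal κ :=
        add_le_add h1 (h2.trans (ENNReal.ofReal_le_ofReal (hstep _)))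
      _ = _ := by
        rw [← ENNReal.ofReal_add (by positivity) hκ]
        push_cast; ring_nf

end PathDistance

/-! ### Selecting a scale along a sequence of heights -/

section Scale

lemma exists_left_run {P : ℕ → Prop} {i a : ℕ} (hia : i ≤ a) (hP : P a) :
    ∃ u, i ≤ u ∧ u ≤ a ∧ (∀ k, u ≤ k → k ≤ a → P k) ∧ (u = i ∨ (i < u ∧ ¬ P (u - 1))) := by
  induction a, hia using Nat.le_induction with
  | base => exact ⟨i, le_rfl, le_rfl, fun k h1 h2 => by rwa [le_antisymm h2 h1], Or.inl rfl⟩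
  | succ a hia ih =>
    by_cases h : P a
    · obtain ⟨u, h1, h2, h3, h4⟩ := ih h
      refine ⟨u, h1, by omega, fun k hk hk' => ?_, h4⟩
      rcases hk'.lt_or_eq with h5 | rfl
      · exact h3 k hk (by omega)
      · exact hP
    · refine ⟨a + 1, by omega, le_rfl, fun k hk hk' => ?_, Or.inr ⟨by omega, by simpa using h⟩⟩
      rwa [le_antisymm hk' hk]

lemma exists_right_run {P : ℕ → Prop} {a j : ℕ} (haj : a ≤ j) (hP : P a) :
    ∃ v, a ≤ v ∧ v ≤ j ∧ (∀ k, a ≤ k → k ≤ v → P k) ∧ (v = j ∨ (v < j ∧ ¬ P (v + 1))) := by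
  obtain ⟨u, h1, h2, h3, h4⟩ := exists_left_run (P := fun k => P (j - k)) (i := 0)
    (a := j - a) (Nat.zero_le _) (by simpa [Nat.sub_sub_self haj] using hP)
  refine ⟨j - u, by omega, by omega, fun k hk hk' => ?_, ?_⟩
  · have := h3 (j - k) (by omega) (by omega)
    rwa [Nat.sub_sub_self (by omega)] at this
  · rcases h4 with rfl | ⟨h4, h5⟩
    · left; rfl
    · right
      refine ⟨by omega, ?_⟩
      rwa [show j - (u - 1) = j - u + 1 by omega] at h5

/-- The maximal interval around `[a, b]`, inside `[i, j]`, on which `f > θ`; the heights at its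
two ends are controlled by those at `i`, `j` and by `θ`. -/
lemma exists_run {f : ℕ → ℝ} {κ θ F : ℝ} (hf : ∀ k, |f (k + 1) - f k| ≤ κ) {i a b j : ℕ}
    (hia : i ≤ a) (hab : a ≤ b) (hbj : b ≤ j) (hθ : ∀ k, a ≤ k → k ≤ b → θ < f k)
    (hi : f i ≤ F) (hj : f j ≤ F) (hF : θ + κ ≤ F) :
    ∃ u v, i ≤ u ∧ u ≤ a ∧ b ≤ v ∧ v ≤ j ∧ (∀ k, u ≤ k → k ≤ v → θ < f k) ∧
      f u ≤ F ∧ f v ≤ F := by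
  obtain ⟨u, hu1, hu2, hu3, hu4⟩ := exists_left_run (P := fun k => θ < f k) hia
    (hθ a le_rfl hab)
  obtain ⟨v, hv1, hv2, hv3, hv4⟩ := exists_right_run (P := fun k => θ < f k) hbj
    (hθ b hab le_rfl)
  refine ⟨u, v, hu1, hu2, hv1, hv2, fun k hk hk' => ?_, ?_, ?_⟩
  · by_cases h1 : k ≤ a
    · exact hu3 k hk h1
    by_cases h2 : b ≤ k
    · exact hv3 k h2 hk'
    exact hθ k (by omega) (by omega)
  · rcases hu4 with rfl | ⟨h, h'⟩
    · exact hi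
    · have := (abs_le.1 (hf (u - 1))).2
      rw [Nat.sub_add_cancel (by omega)] at this
      linarith [not_lt.1 h']
  · rcases hv4 with rfl | ⟨h, hlow⟩
    · exact hj
    · have := (abs_le.1 (hf v)).1
      linarith [not_lt.1 hlow]

/-- Scale selection. If `f ≥ R` on `[i, j]` and `f` is at most `ε (j - i)` at both ends, then some
subinterval `[u, v]` of length comparable to `q` has `f > ε q` throughout and `f ≲ ε q` at its
ends. Cut `[i, j]` into eight pieces of length `q`: if both the second and the fourth one contain
points with `f ≤ ε q`, these bound a shorter interval satisfying the same hypotheses; otherwise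
one of these pieces extends to an interval as wanted. -/
lemma exists_scale {f : ℕ → ℝ} {κ ε R : ℝ} (hκ : 0 ≤ κ) (hε : 0 < ε) (hεR : 8 * ε ≤ R)
    (hf : ∀ k, |f (k + 1) - f k| ≤ κ) :
    ∀ T i j : ℕ, i + T = j → (∀ k, i ≤ k → k ≤ j → R ≤ f k) → f i ≤ ε * T → f j ≤ ε * T →
      ∃ u v q : ℕ, v ≤ j ∧ 0 < q ∧ R ≤ 16 * (ε * q) ∧ u + q ≤ v ∧ v ≤ u + 16 * q ∧
        (∀ k, u ≤ k → k ≤ v → ε * q < f k) ∧ f u ≤ 16 * (ε * q) + κ ∧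
        f v ≤ 16 * (ε * q) + κ := by
  intro T
  induction T using Nat.strong_induction_on with
  | _ T ih =>
  intro i j hij hR hi hj
  have hRT : R ≤ ε * T := (hR i le_rfl (by omega)).trans hi
  have hT8 : 8 ≤ T := by
    have : ε * 8 ≤ ε * T := by linarith
    exact_mod_cast le_of_mul_le_mul_left this hε
  obtain ⟨q, hq⟩ : ∃ q, q = T / 8 := ⟨_, rfl⟩
  have hq0 : 0 < q := by omega
  have hqT : 8 * q ≤ T := by omega
  have hTq : T ≤ 16 * q := by omega
  have hεq : 0 < ε * q := by positivity
  have hTq' : ε * T ≤ 16 * (ε * q) := by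
    have : (T : ℝ) ≤ 16 * q := by exact_mod_cast hTq
    nlinarith
  have key : ∀ a b : ℕ, i ≤ a → a + q ≤ b → b ≤ j → (∀ k, a ≤ k → k ≤ b → ε * q < f k) →
      ∃ u v q : ℕ, v ≤ j ∧ 0 < q ∧ R ≤ 16 * (ε * q) ∧ u + q ≤ v ∧ v ≤ u + 16 * q ∧
        (∀ k, u ≤ k → k ≤ v → ε * q < f k) ∧ f u ≤ 16 * (ε * q) + κ ∧
        f v ≤ 16 * (ε * q) + κ := by
    intro a b hia hab hbj hlow
    obtain ⟨u, v, h1, h2, h3, h4, h5, h6, h7⟩ := exists_run (F := 16 * (ε * q) + κ) hf hia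
      (by omega) hbj hlow (by linarith) (by linarith) (by linarith)
    exact ⟨u, v, q, h4, hq0, by linarith, by omega, by omega, h5, h6, h7⟩
  by_cases h1 : ∃ u, i + q ≤ u ∧ u ≤ i + 2 * q ∧ f u ≤ ε * q
  · by_cases h2 : ∃ v, i + 3 * q ≤ v ∧ v ≤ i + 4 * q ∧ f v ≤ ε * q
    · obtain ⟨u, hu1, hu2, hu3⟩ := h1
      obtain ⟨v, hv1, hv2, hv3⟩ := h2
      have hqv : ε * q ≤ ε * ((v - u : ℕ) : ℝ) := by
        have : (q : ℝ) ≤ ((v - u : ℕ) : ℝ) := by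
          exact_mod_cast (by omega : q ≤ v - u)
        nlinarith
      obtain ⟨u', v', q', h4, h5⟩ := ih (v - u) (by omega) u v (by omega)
        (fun k hk hk' => hR k (by omega) (by omega)) (by linarith) (by linarith)
      exact ⟨u', v', q', by omega, h5⟩
    · push Not at h2
      exact key (i + 3 * q) (i + 4 * q) (by omega) (by omega) (by omega) h2
  · push Not at h1
    exact key (i + q) (i + 2 * q) (by omega) (by omega) (by omega) h1

end Scale

/-! ### Completely super linear divergence implies Morse -/

section CSLToMorse

variable {X : Type*} [MetricSpace X] {A : Set X}

lemma infDist_le_of_steps {p : ℕ → X} {κ : ℝ} (hstep : ∀ k, dist (p k) (p (k + 1)) ≤ κ) (i n : ℕ) :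
    infDist (p (i + n)) A ≤ infDist (p i) A + κ * n := by
  induction n with
  | zero => simp
  | succ n ih =>
    have h := infDist_le_infDist_add_dist (s := A) (x := p (i + n + 1)) (y := p (i + n))
    have h' := hstep (i + n)
    rw [dist_comm] at h'
    push_cast
    rw [← add_assoc]
    linarith

/-- A discrete quasi-geodesic `p` from `A` to `A` stays uniformly close to `A` when `σ^n_1` is
completely super linear. A large excursion contains, at some scale `r > B`, a segment of length
comparable to `r`, of height above `2 r` throughout and at most `33 r` at both ends. Descending
from its ends to height exactly `r` gives a pair of points violating `Λ r < σ^n_1(r)`. -/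
lemma exists_bound_of_csl (hX : IsGeodesicSpace X) (hA : A.Nonempty) {n : ℕ}
    (hcsl : CompletelySuperLinear (lowerRelDiv A n 1)) {K C : ℝ} (hK : 1 ≤ K) (hC : 0 ≤ C) :
    ∃ M : ℝ, 0 ≤ M ∧ ∀ (p : ℕ → X) (N : ℕ), p 0 ∈ A → p N ∈ A →
      (∀ k, dist (p k) (p (k + 1)) ≤ K + C) →
      (∀ u v : ℕ, u ≤ v → v ≤ N → (1 / K) * ((v : ℝ) - u - 1) - C ≤ dist (p u) (p v)) →
      ∀ k ≤ N, infDist (p k) A ≤ M := by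
  have hK0 : 0 < K := by linarith
  obtain ⟨κ, hκdef⟩ : ∃ κ, κ = K + C := ⟨_, rfl⟩
  have hκ1 : 1 ≤ κ := by linarith
  have hκ0 : 0 < κ := by linarith
  obtain ⟨ε, hεdef⟩ : ∃ ε : ℝ, ε = 2 / (K * (n + 72)) := ⟨_, rfl⟩
  have hε : 0 < ε := by rw [hεdef]; positivity
  have hεK : ε * (K * (n + 72)) = 2 := by rw [hεdef]; field_simp
  obtain ⟨Λ, hΛdef⟩ : ∃ Λ, Λ = 68 + 32 * κ / ε := ⟨_, rfl⟩
  have hΛ : 0 < Λ := by rw [hΛdef]; positivity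
  obtain ⟨B, hB⟩ := hcsl Λ hΛ
  obtain ⟨R, hRdef⟩ : ∃ R, R = 32 * (|B| + κ + 1) + 8 * ε := ⟨_, rfl⟩
  have hR0 : 0 < R := by rw [hRdef]; positivity
  refine ⟨R + κ + κ * ((R + κ) / ε), by positivity, fun p N hp0 hpN hstep hlow k hk => ?_⟩
  rw [← hκdef] at hstep
  by_contra! hbig
  set f : ℕ → ℝ := fun k => infDist (p k) A with hfdef
  have hfstep : ∀ k, |f (k + 1) - f k| ≤ κ := fun k => by
    have h1 := infDist_le_infDist_add_dist (s := A) (x := p (k + 1)) (y := p k)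
    have h2 := infDist_le_infDist_add_dist (s := A) (x := p k) (y := p (k + 1))
    rw [dist_comm] at h1
    have h3 := hstep k
    rw [abs_le]
    constructor <;> simp only [hfdef] <;> linarith
  have hf0 : f 0 = 0 := infDist_zero_of_mem hp0
  have hfN : f N = 0 := infDist_zero_of_mem hpN
  have hbig' : R + κ + κ * ((R + κ) / ε) < f k := hbig
  have hkap : 0 < κ * ((R + κ) / ε) := by positivity
  -- the excursion above height `R` around `k`
  obtain ⟨i, j, -, hik, hkj, hjN, hRij, hi, hj⟩ := exists_run (F := R + κ) (θ := R) hfstep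
    (Nat.zero_le k) le_rfl hk
    (fun l h1 h2 => by rw [le_antisymm h2 h1]; linarith) (by linarith) (by linarith) le_rfl
  have hT : R + κ ≤ ε * ((j - i : ℕ) : ℝ) := by
    have h1 := infDist_le_of_steps (A := A) hstep i (k - i)
    rw [Nat.add_sub_cancel' hik] at h1
    have h2 : ((k - i : ℕ) : ℝ) ≤ ((j - i : ℕ) : ℝ) := by exact_mod_cast (by omega)
    have h3 : κ * ((R + κ) / ε) ≤ κ * ((j - i : ℕ) : ℝ) := by
      have h4 : f k ≤ f i + κ * ((k - i : ℕ) : ℝ) := h1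
      nlinarith
    have h4 := le_of_mul_le_mul_left h3 hκ0
    rwa [div_le_iff₀ hε, mul_comm] at h4
  obtain ⟨u, v, q, hvj, hq, hRq, huv, hvu, hhigh, hu, hv⟩ := exists_scale hκ0.le hε
    (by rw [hRdef]; linarith [abs_nonneg B]) hfstep (j - i) i j (by omega)
    (fun l h1 h2 => (hRij l h1 h2).le) (hi.trans hT) (hj.trans hT)
  have hvN : v ≤ N := hvj.trans hjN
  obtain ⟨r, hrdef⟩ : ∃ r, r = ε * q / 2 := ⟨_, rfl⟩
  have hεq : ε * q = 2 * r := by rw [hrdef]; ring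
  rw [hεq] at hRq hhigh hu hv
  have hrB : |B| + κ + 1 ≤ r := by linarith
  have hrκ : κ ≤ r := by linarith [abs_nonneg B]
  have hr0 : 0 < r := by linarith
  have huv' : u ≤ v := by omega
  obtain ⟨x, hxr, hxd, hxp⟩ := exists_descent hX hA hr0.le (x := p u)
    (by have := hhigh u le_rfl huv'; simp only [hfdef] at this; linarith)
  obtain ⟨y, hyr, hyd, hyp⟩ := exists_descent hX hA hr0.le (x := p v)
    (by have := hhigh v huv' le_rfl; simp only [hfdef] at this; linarith)
  have hu34 : infDist (p u) A + 1 ≤ 34 * r := by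
    have : f u + 1 ≤ 34 * r := by linarith
    exact this
  have hv34 : infDist (p v) A + 1 ≤ 34 * r := by
    have : f v + 1 ≤ 34 * r := by linarith
    exact this
  have hmid : relPathDist A r (p u) (p v) ≤ ENNReal.ofReal (32 * κ / ε * r) := by
    have h := relPathDist_chain_le (A := A) (r := r) (i := u) (n := v - u) hX hκ0.le hstep
      (fun l h1 h2 => by
        have : 2 * r < infDist (p l) A := hhigh l h1 (by omega)
        linarith)
    rw [Nat.add_sub_cancel' huv'] at h
    refine h.trans (ENNReal.ofReal_le_ofReal ?_)
    have h1 : ((v - u : ℕ) : ℝ) ≤ 16 * q := by exact_mod_cast (by omega : v - u ≤ 16 * q)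
    have h2 : 32 * κ / ε * r = κ * (16 * q) := by rw [hrdef]; field_simp; ring
    rw [h2]
    exact mul_le_mul_of_nonneg_left h1 hκ0.le
  have hpath : relPathDist A r x y ≤ ENNReal.ofReal (Λ * r) := by
    calc relPathDist A r x y
        ≤ relPathDist A r x (p u) + relPathDist A r (p u) y := relPathDist_triangle ..
      _ ≤ relPathDist A r x (p u) + (relPathDist A r (p u) (p v) + relPathDist A r (p v) y) :=
          add_le_add le_rfl (relPathDist_triangle ..)
      _ ≤ ENNReal.ofReal (34 * r) + (ENNReal.ofReal (32 * κ / ε * r) +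
            ENNReal.ofReal (34 * r)) :=
          add_le_add (hxp.trans (ENNReal.ofReal_le_ofReal hu34)) (add_le_add hmid
            (((relPathDist_comm_le _ _ _).trans hyp).trans (ENNReal.ofReal_le_ofReal hv34)))
      _ = ENNReal.ofReal (Λ * r) := by
          rw [← ENNReal.ofReal_add (by positivity) (by positivity),
            ← ENNReal.ofReal_add (by positivity) (by positivity), hΛdef]
          ring_nf
  have hdist : (n : ℝ) * r ≤ dist x y := by
    have h1 := hlow u v huv' hvN
    have h2 : (q : ℝ) ≤ (v : ℝ) - u := by
      have : ((u + q : ℕ) : ℝ) ≤ v := by exact_mod_cast huv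
      push_cast at this; linarith
    have h3 : (1 / K) * (q : ℝ) = (n + 72) * r := by
      have : (q : ℝ) = K * (n + 72) * r := by
        have h5 : ε * q = ε * (K * (n + 72) * r) := by rw [hεq, ← hεK]; ring
        exact mul_left_cancel₀ hε.ne' h5
      rw [this]; field_simp
    have h4 : (1 / K) * ((q : ℝ) - 1) ≤ (1 / K) * ((v : ℝ) - u - 1) :=
      mul_le_mul_of_nonneg_left (by linarith) (by positivity)
    have h5 : 1 / K ≤ 1 := by rw [div_le_one hK0]; exact hK
    have h6 : dist (p u) (p v) ≤ dist x (p u) + dist x y + dist y (p v) := by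
      have h7 := dist_triangle (p u) x (p v)
      have h8 := dist_triangle x y (p v)
      rw [dist_comm (p u) x] at h7
      linarith
    nlinarith
  have hσ : lowerRelDiv A n 1 r ≤ ENNReal.ofReal (Λ * r) := by
    refine iInf_le_of_le x <| iInf_le_of_le y <| iInf_le_of_le hxr <| iInf_le_of_le hyr <|
      iInf_le_of_le (hpath.trans_lt ENNReal.ofReal_lt_top).ne <| iInf_le_of_le hdist ?_
    rwa [one_mul]
  have := hB r hr0.le hσ
  linarith [le_abs_self B]

lemma isMorse_of_csl (hX : IsGeodesicSpace X) (hA : A.Nonempty) {n : ℕ}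
    (hcsl : CompletelySuperLinear (lowerRelDiv A n 1)) : IsMorse A := by
  intro K C hK hC
  obtain ⟨M, hM0, hM⟩ := exists_bound_of_csl hX hA hcsl hK hC
  refine ⟨M + (K + C), by linarith, fun γ a b hab hγ ha hb t ht => ?_⟩
  have hK0 : 0 < K := by linarith
  set s : ℕ → ℝ := fun k => min (a + k) b with hs
  have hsmem : ∀ k, s k ∈ Icc a b := fun k =>
    ⟨le_min (by linarith [Nat.cast_nonneg (α := ℝ) k]) hab, min_le_right _ _⟩
  have hup : ∀ t ∈ Icc a b, ∀ t' ∈ Icc a b, |t - t'| ≤ 1 → dist (γ t) (γ t') ≤ K + C := by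
    intro t ht t' ht' h
    have := (hγ t ht t' ht').2
    nlinarith
  set N := ⌈b - a⌉₊ with hN
  have hNb : s N = b := min_eq_right (by linarith [Nat.le_ceil (b - a)])
  have h0 : s 0 = a := by simp [hs, hab]
  have hmain := hM (fun k => γ (s k)) N (by simpa only [h0] using ha)
    (by simpa only [hNb] using hb)
    (fun k => hup _ (hsmem k) _ (hsmem _) (by
      rw [abs_le]
      simp only [hs, Nat.cast_add, Nat.cast_one]
      constructor <;> grind))
    (fun u v huv hv => by
      refine le_trans ?_ (hγ _ (hsmem u) _ (hsmem v)).1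
      have h1 : (v : ℝ) - u - 1 ≤ |s u - s v| := by
        rw [abs_sub_comm]
        refine le_trans ?_ (le_abs_self _)
        have h2 : a + v - 1 ≤ s v := by
          refine le_min (by linarith) ?_
          rcases Nat.eq_zero_or_pos v with rfl | hv0
          · simp; linarith
          · have : ((v - 1 : ℕ) : ℝ) < b - a := Nat.lt_ceil.1 (by omega)
            rw [Nat.cast_sub hv0] at this
            push_cast at this
            linarith
        have h3 : s u ≤ a + u := min_le_left _ _
        linarith
      have := mul_le_mul_of_nonneg_left h1 (by positivity : 0 ≤ 1 / K)
      linarith)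
  have hta : 0 ≤ t - a := by linarith [ht.1]
  have hfl := Nat.floor_le hta
  have hfl' := Nat.lt_floor_add_one (t - a)
  have hsk : s ⌊t - a⌋₊ = a + ⌊t - a⌋₊ := min_eq_left (by linarith [ht.2])
  have hk := hmain ⌊t - a⌋₊ (by
    refine (Nat.floor_le_ceil _).trans (Nat.ceil_mono (by linarith [ht.2])))
  have hd := hup t ht _ (hsmem ⌊t - a⌋₊) (by
    rw [hsk, abs_le]; constructor <;> linarith)
  have := infDist_le_infDist_add_dist (s := A) (x := γ t) (y := γ (s ⌊t - a⌋₊))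
  linarith

end CSLToMorse

/-! ### Morse implies completely super linear divergence -/

section MorseToCSL

variable {X : Type*} [MetricSpace X] {A : Set X}

/-- `ChainCost w y z c`: there is a chain `z = z₀, z₁, …, z_m = y` with consecutive points at
distance at most `1` whose weighted length `∑_{i < m} w (z_i)` equals `c`. -/
inductive ChainCost (w : X → ℕ) (y : X) : X → ℕ → Prop
  | nil : ChainCost w y y 0
  | cons {z z' : X} {c : ℕ} : dist z z' ≤ 1 → ChainCost w y z' c → ChainCost w y z (w z + c)

/-- The least weighted length of a chain from `z` to `y` (junk value `0` if there is no chain,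
which does not happen in a geodesic space). -/
def minCost (w : X → ℕ) (y z : X) : ℕ := sInf {c | ChainCost w y z c}

/-- A path of length at most `n` through points of weight at most `W` is followed by a chain with
at most `n + 1` steps: as long as the path leaves the unit ball around its current point, cut it at the
first point at distance exactly `1`, which uses up one unit of length. -/
lemma ChainCost.of_path {w : X → ℕ} {y : X} {W : ℕ} {γ : ℝ → X} {b : ℝ} :
    ∀ (n : ℕ) (a : ℝ), a ≤ b → ContinuousOn γ (Icc a b) → (∀ t ∈ Icc a b, w (γ t) ≤ W) →
      eVariationOn γ (Icc a b) ≤ n → ∀ c, ChainCost w y (γ b) c →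
      ∃ c', c' ≤ W * (n + 1) + c ∧ ChainCost w y (γ a) c' := by
  have short : ∀ (n : ℕ) (a : ℝ), a ≤ b → (∀ t ∈ Icc a b, w (γ t) ≤ W) →
      dist (γ a) (γ b) ≤ 1 → ∀ c, ChainCost w y (γ b) c →
      ∃ c', c' ≤ W * (n + 1) + c ∧ ChainCost w y (γ a) c' := by
    intro n a hab hw hd c hc
    refine ⟨w (γ a) + c, ?_, hc.cons hd⟩
    have := hw a ⟨le_rfl, hab⟩
    nlinarith [Nat.zero_le (W * n)]
  intro n
  induction n with
  | zero =>
    intro a hab hcont hw hv c hc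
    refine short 0 a hab hw ?_ c hc
    have h := (eVariationOn.edist_le γ (⟨le_rfl, hab⟩ : a ∈ Icc a b)
      (⟨hab, le_rfl⟩ : b ∈ Icc a b)).trans hv
    have h0 : edist (γ a) (γ b) = 0 := by simpa using h
    rw [edist_eq_zero] at h0
    rw [h0, dist_self]; norm_num
  | succ n ih =>
    intro a hab hcont hw hv c hc
    by_cases hd : dist (γ a) (γ b) ≤ 1
    · exact short _ a hab hw hd c hc
    push Not at hd
    obtain ⟨s, hs, hs1⟩ := intermediate_value_Icc hab
      (f := fun t => dist (γ a) (γ t)) (Continuous.comp_continuousOn (continuous_const.dist continuous_id) hcont)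
      (show (1 : ℝ) ∈ Icc _ _ from ⟨by simp, hd.le⟩)
    have hs1 : dist (γ a) (γ s) = 1 := hs1
    have hadd := eVariationOn.Icc_add_Icc γ (s := univ) hs.1 hs.2 (mem_univ s)
    simp only [univ_inter] at hadd
    have h1 : (1 : ℝ≥0∞) ≤ eVariationOn γ (Icc a s) := by
      have := eVariationOn.edist_le γ (s := Icc a s) (x := a) (y := s) ⟨le_rfl, hs.1⟩
        ⟨hs.1, le_rfl⟩
      rwa [edist_dist, hs1, ENNReal.ofReal_one] at this
    have h2 : eVariationOn γ (Icc s b) ≤ n := by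
      have h3 : 1 + eVariationOn γ (Icc s b) ≤ 1 + n := by
        calc _ ≤ eVariationOn γ (Icc a s) + eVariationOn γ (Icc s b) := add_le_add h1 le_rfl
          _ ≤ _ := by rw [hadd]; refine hv.trans ?_; push_cast; rw [add_comm]
      exact (ENNReal.add_le_add_iff_left ENNReal.one_ne_top).1 h3
    have hsub : Icc s b ⊆ Icc a b := Icc_subset_Icc_left hs.1
    obtain ⟨c', hc', hch⟩ := ih s hs.2 (hcont.mono hsub) (fun t ht => hw t (hsub ht)) h2 c hc
    refine ⟨w (γ a) + c', ?_, hch.cons hs1.le⟩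
    have := hw a ⟨le_rfl, hab⟩
    nlinarith

lemma exists_chainCost (hX : IsGeodesicSpace X) (w : X → ℕ) {W : ℕ} (hW : ∀ z, w z ≤ W)
    (y z : X) : ∃ c, ChainCost w y z c := by
  obtain ⟨γ, h0, h1, hg⟩ := hX.exists_geodesic z y
  obtain ⟨c, -, hc⟩ := ChainCost.of_path (W := W) (w := w) (y := y) ⌈dist z y⌉₊ 0 dist_nonneg
    hg.continuousOn (fun _ _ => hW _) (hg.eVariationOn_le.trans (by
      rw [sub_zero, ← ENNReal.ofReal_natCast]
      exact ENNReal.ofReal_le_ofReal (Nat.le_ceil _))) 0 (by rw [h1]; exact ChainCost.nil)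
  exact ⟨c, by rwa [h0] at hc⟩

lemma minCost_le {w : X → ℕ} {y z : X} {c : ℕ} (h : ChainCost w y z c) : minCost w y z ≤ c :=
  Nat.sInf_le h

lemma chainCost_minCost (hX : IsGeodesicSpace X) (w : X → ℕ) {W : ℕ} (hW : ∀ z, w z ≤ W)
    (y z : X) : ChainCost w y z (minCost w y z) :=
  Nat.sInf_mem (exists_chainCost hX w hW y z)

lemma minCost_self (w : X → ℕ) (y : X) : minCost w y y = 0 :=
  Nat.le_zero.1 (minCost_le ChainCost.nil)

lemma minCost_le_of_path (hX : IsGeodesicSpace X) {w : X → ℕ} {W₀ : ℕ} (hW₀ : ∀ z, w z ≤ W₀)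
    (y : X) {W n : ℕ} {γ : ℝ → X} {a b : ℝ} (hab : a ≤ b) (hγ : ContinuousOn γ (Icc a b))
    (hw : ∀ t ∈ Icc a b, w (γ t) ≤ W) (hn : eVariationOn γ (Icc a b) ≤ n) :
    minCost w y (γ a) ≤ W * (n + 1) + minCost w y (γ b) := by
  obtain ⟨c, hc, hch⟩ := ChainCost.of_path n a hab hγ hw hn _ (chainCost_minCost hX w hW₀ y (γ b))
  exact (minCost_le hch).trans hc

lemma minCost_le_of_geodesic (hX : IsGeodesicSpace X) {w : X → ℕ} {W₀ : ℕ} (hW₀ : ∀ z, w z ≤ W₀)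
    (y : X) {W : ℕ} {γ : ℝ → X} {a b : ℝ} (hab : a ≤ b) (hγ : IsGeodesicOn γ a b)
    (hw : ∀ t ∈ Icc a b, w (γ t) ≤ W) :
    (minCost w y (γ a) : ℝ) ≤ W * (b - a + 2) + minCost w y (γ b) := by
  have h := minCost_le_of_path hX hW₀ y (n := ⌈b - a⌉₊) hab hγ.continuousOn hw
    (hγ.eVariationOn_le.trans (by
      rw [← ENNReal.ofReal_natCast]
      exact ENNReal.ofReal_le_ofReal (Nat.le_ceil _)))
  have h1 : (minCost w y (γ a) : ℝ) ≤ W * ((⌈b - a⌉₊ : ℝ) + 1) + minCost w y (γ b) := by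
    exact_mod_cast h
  have h2 := (Nat.ceil_lt_add_one (sub_nonneg.2 hab)).le
  have h3 : (0 : ℝ) ≤ W := Nat.cast_nonneg _
  nlinarith

lemma minCost_le_add_dist (hX : IsGeodesicSpace X) {w : X → ℕ} {W : ℕ} (hW : ∀ z, w z ≤ W)
    (y z z' : X) : (minCost w y z : ℝ) ≤ W * (dist z z' + 2) + minCost w y z' := by
  obtain ⟨γ, h0, h1, hg⟩ := hX.exists_geodesic z z'
  have := minCost_le_of_geodesic hX hW y dist_nonneg hg (fun t _ => hW _)
  rwa [h0, h1, sub_zero] at this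

lemma exists_optimal_step (hX : IsGeodesicSpace X) {w : X → ℕ} {W : ℕ} (hW : ∀ z, w z ≤ W)
    {y z : X} (hz : z ≠ y) :
    ∃ z', dist z z' ≤ 1 ∧ minCost w y z = w z + minCost w y z' := by
  have h := chainCost_minCost hX w hW y z
  generalize hc : minCost w y z = c at h
  cases h with
  | nil => exact absurd rfl hz
  | @cons _ z' c' hd hch =>
    refine ⟨z', hd, le_antisymm ?_ (Nat.add_le_add_left (minCost_le hch) _)⟩
    rw [← hc]
    exact minCost_le ((chainCost_minCost hX w hW y z').cons hd)

lemma exists_optimal_chain (hX : IsGeodesicSpace X) {w : X → ℕ} {W : ℕ} (hW : ∀ z, w z ≤ W)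
    (hw : ∀ z, 1 ≤ w z) (y : X) : ∀ (n : ℕ) (z : X), minCost w y z = n →
      ∃ (m : ℕ) (q : ℕ → X), q 0 = z ∧ q m = y ∧ ∀ i < m, dist (q i) (q (i + 1)) ≤ 1 ∧
        minCost w y (q i) = w (q i) + minCost w y (q (i + 1)) := by
  intro n
  induction n using Nat.strong_induction_on with
  | _ n ih =>
  intro z hz
  by_cases hzy : z = y
  · exact ⟨0, fun _ => z, rfl, hzy, fun i hi => absurd hi (Nat.not_lt_zero i)⟩
  obtain ⟨z', hd, hc⟩ := exists_optimal_step hX hW hzy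
  obtain ⟨m, q, h0, hm, hq⟩ := ih (minCost w y z') (by have := hw z; omega) z' rfl
  refine ⟨m + 1, fun i => Nat.casesOn i z q, rfl, hm, fun i hi => ?_⟩
  cases i with
  | zero => simpa [h0] using ⟨hd, hc⟩
  | succ i => exact hq i (by omega)

/-- A chain minimising the weighted length, for weights between `1` and `W`, is a
`(W, 3)`-quasi-geodesic: along it, the number of steps is at most the drop of `minCost`, which
is at most `W` times the distance, up to a constant. -/
lemma qiEmbedOn_optimal_chain (hX : IsGeodesicSpace X) {w : X → ℕ} {W : ℕ} (hW : ∀ z, w z ≤ W)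
    (hw : ∀ z, 1 ≤ w z) {y : X} {m : ℕ} {q : ℕ → X}
    (hq : ∀ i < m, dist (q i) (q (i + 1)) ≤ 1 ∧
      minCost w y (q i) = w (q i) + minCost w y (q (i + 1))) :
    QIEmbedOn (fun t : ℝ => q ⌊t⌋₊) (Icc 0 m) W 3 := by
  have hW1 : (1 : ℝ) ≤ W := by exact_mod_cast (hw y).trans (hW y)
  have hup : ∀ i n, i + n ≤ m → dist (q i) (q (i + n)) ≤ n := by
    intro i n
    induction n with
    | zero => simp
    | succ n ih =>
      intro h
      have h1 := ih (by omega)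
      have h2 := (hq (i + n) (by omega)).1
      have h3 := dist_triangle (q i) (q (i + n)) (q (i + n + 1))
      push_cast; rw [← add_assoc]; linarith
  have hlow : ∀ i n, i + n ≤ m → n + minCost w y (q (i + n)) ≤ minCost w y (q i) := by
    intro i n
    induction n with
    | zero => simp
    | succ n ih =>
      intro h
      have h1 := ih (by omega)
      have h2 := (hq (i + n) (by omega)).2
      have h3 := hw (q (i + n))
      rw [← add_assoc]; omega
  have main : ∀ s t : ℝ, 0 ≤ s → s ≤ t → t ≤ m →
      (1 / (W : ℝ)) * (t - s) - 3 ≤ dist (q ⌊s⌋₊) (q ⌊t⌋₊) ∧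
      dist (q ⌊s⌋₊) (q ⌊t⌋₊) ≤ W * (t - s) + 3 := by
    intro s t hs hst htm
    have ht : 0 ≤ t := hs.trans hst
    have hi := Nat.floor_le hs
    have hi' := Nat.lt_floor_add_one s
    have hj := Nat.floor_le ht
    have hj' := Nat.lt_floor_add_one t
    obtain ⟨n, hn⟩ := Nat.exists_eq_add_of_le (Nat.floor_mono hst)
    have hjm : ⌊t⌋₊ ≤ m := by
      have : (⌊t⌋₊ : ℝ) ≤ m := hj.trans htm
      exact_mod_cast this
    have hnr : (⌊t⌋₊ : ℝ) = ⌊s⌋₊ + n := by exact_mod_cast hn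
    have h1 := hup ⌊s⌋₊ n (by omega)
    have h2 := hlow ⌊s⌋₊ n (by omega)
    rw [← hn] at h1 h2
    have h3 := minCost_le_add_dist hX hW y (q ⌊s⌋₊) (q ⌊t⌋₊)
    have h4 : (n : ℝ) + minCost w y (q ⌊t⌋₊) ≤ minCost w y (q ⌊s⌋₊) := by exact_mod_cast h2
    constructor
    · have h5 : t - s ≤ W * (dist (q ⌊s⌋₊) (q ⌊t⌋₊) + 3) := by nlinarith
      have h6 : (1 / (W : ℝ)) * (t - s) ≤ dist (q ⌊s⌋₊) (q ⌊t⌋₊) + 3 := by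
        rw [one_div, inv_mul_le_iff₀ (by linarith)]
        exact h5
      linarith
    · nlinarith
  intro s hs t ht
  rcases le_total s t with h | h
  · have := main s t hs.1 h ht.2
    rwa [abs_sub_comm, abs_of_nonneg (sub_nonneg.2 h)]
  · have := main t s ht.1 h hs.2
    rw [dist_comm, abs_of_nonneg (sub_nonneg.2 h)]
    exact this

lemma csl_of_isMorse (hX : IsGeodesicSpace X) (hA : A.Nonempty) (hM : IsMorse A) {ρ : ℝ}
    (hρ : 0 < ρ) (hρ1 : ρ ≤ 1) : CompletelySuperLinear (lowerRelDiv A 4 ρ) := by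
  intro C hC
  obtain ⟨W, hWdef⟩ : ∃ W : ℕ, W = ⌈C⌉₊ + 3 := ⟨_, rfl⟩
  have hWC : C + 3 ≤ W := by
    rw [hWdef]; push_cast; linarith [Nat.le_ceil C]
  have hW1 : 1 ≤ W := by omega
  obtain ⟨N, hN0, hN⟩ := hM W 3 (by exact_mod_cast hW1) (by norm_num)
  refine ⟨max (8 * W + 7) (2 * N / ρ), fun r hr hσ => ?_⟩
  have hlt : lowerRelDiv A 4 ρ r < ENNReal.ofReal (C * r + 1) :=
    hσ.trans_lt ((ENNReal.ofReal_lt_ofReal_iff (by positivity)).2 (by linarith))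
  simp only [lowerRelDiv, iInf_lt_iff] at hlt
  obtain ⟨x, y, hx, hy, -, hxy, hlt⟩ := hlt
  obtain ⟨γ, a, b, hab, hγ, rfl, rfl, hγr, hγl⟩ := exists_path_of_relPathDist_lt hlt
  set x := γ a
  set y := γ b
  obtain ⟨R, hR⟩ : ∃ R, R = ρ * r / 2 := ⟨_, rfl⟩
  have hρr : ρ * r ≤ r := by nlinarith
  have hρr0 : 0 ≤ ρ * r := by positivity
  -- chains are charged `W` per step within distance `R` of `A`, and `1` elsewhere
  set w : X → ℕ := fun z => if infDist z A < R then W else 1 with hwdef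
  have hwW : ∀ z, w z ≤ W := fun z => by simp only [hwdef]; split_ifs <;> omega
  have hw1 : ∀ z, 1 ≤ w z := fun z => by simp only [hwdef]; split_ifs <;> omega
  have hwR : ∀ z, R ≤ infDist z A → w z ≤ 1 := fun z hz => by
    simp only [hwdef, if_neg (not_lt.2 hz), le_rfl]
  obtain ⟨x', hx'A, hx'⟩ := (infDist_lt_iff hA).1 (lt_add_one (infDist x A))
  obtain ⟨y', hy'A, hy'⟩ := (infDist_lt_iff hA).1 (lt_add_one (infDist y A))
  have hxr : r ≤ dist x x' := hx ▸ infDist_le_dist_of_mem hx'A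
  have hyr : r ≤ dist y y' := hy ▸ infDist_le_dist_of_mem hy'A
  rw [hx] at hx'
  rw [hy] at hy'
  have hW0 : (0 : ℝ) ≤ W := Nat.cast_nonneg _
  -- cost of the descent from `y` to `y'`
  have hcost_y : (minCost w y' y : ℝ) ≤ (r + 2) + W * (R + 3) := by
    obtain ⟨δ, h0, h1, hg⟩ := hX.exists_geodesic y y'
    have e1 := minCost_le_of_geodesic hX hwW y' (W := 1) (a := 0) (b := r - R) (by linarith)
      (hg.mono le_rfl (by linarith)) (fun t ht => hwR _ (by
        have e := hg 0 ⟨le_rfl, dist_nonneg⟩ t ⟨ht.1, by linarith [ht.2]⟩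
        rw [h0, zero_sub, abs_neg, abs_of_nonneg ht.1] at e
        have := infDist_le_infDist_add_dist (s := A) (x := y) (y := δ t)
        linarith [ht.2]))
    have e2 := minCost_le_of_geodesic hX hwW y' (W := W) (a := r - R) (b := dist y y')
      (by linarith) (hg.mono (by linarith) le_rfl) (fun t _ => hwW _)
    rw [h1, minCost_self] at e2
    rw [h0] at e1
    push_cast at e1 e2
    nlinarith
  -- cost of the given path from `x` to `y`
  have hcost_xy : (minCost w y' x : ℝ) ≤ (C * r + 3) + minCost w y' y := by
    have e := minCost_le_of_path hX hwW y' (W := 1) (n := ⌈C * r + 1⌉₊) hab hγ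
      (fun t ht => hwR _ (by linarith [hγr t ht])) (hγl.le.trans (by
        rw [← ENNReal.ofReal_natCast]
        exact ENNReal.ofReal_le_ofReal (Nat.le_ceil _)))
    have e' : (minCost w y' x : ℝ) ≤ 1 * ((⌈C * r + 1⌉₊ : ℝ) + 1) + minCost w y' y := by
      exact_mod_cast e
    have := Nat.ceil_lt_add_one (show 0 ≤ C * r + 1 by positivity)
    linarith
  -- cost of the ascent from `x'` to `x`
  have hcost_x : (minCost w y' x' : ℝ) ≤ W * (R + 3) + (r + 2) + minCost w y' x := by
    obtain ⟨δ, h0, h1, hg⟩ := hX.exists_geodesic x' x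
    rw [dist_comm] at hxr hx'
    have e1 := minCost_le_of_geodesic hX hwW y' (W := W) (a := 0) (b := dist x' x - (r - R))
      (by linarith) (hg.mono le_rfl (by linarith)) (fun t _ => hwW _)
    have e2 := minCost_le_of_geodesic hX hwW y' (W := 1) (a := dist x' x - (r - R))
      (b := dist x' x) (by linarith) (hg.mono (by linarith) le_rfl) (fun t ht => hwR _ (by
        have e := hg (dist x' x) ⟨dist_nonneg, le_rfl⟩ t ⟨by linarith [ht.1], ht.2⟩
        rw [h1, abs_of_nonneg (by linarith [ht.2])] at e
        have := infDist_le_infDist_add_dist (s := A) (x := x) (y := δ t)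
        linarith [ht.1]))
    rw [h0] at e1
    rw [h1] at e2
    push_cast at e1 e2
    nlinarith
  obtain ⟨m, q, hq0, hqm, hq⟩ := exists_optimal_chain hX hwW hw1 y' _ x' rfl
  have hqi := qiEmbedOn_optimal_chain hX hwW hw1 hq
  by_cases hfar : ∃ i < m, R ≤ infDist (q i) A
  · obtain ⟨i, him, hi⟩ := hfar
    have h := hN _ 0 m (Nat.cast_nonneg m) hqi (by simpa [hq0] using hx'A)
      (by simpa [hqm] using hy'A) i ⟨Nat.cast_nonneg i, by exact_mod_cast him.le⟩
    rw [Nat.floor_natCast] at h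
    refine le_max_of_le_right ?_
    rw [le_div_iff₀ hρ]
    linarith
  · -- a chain staying within distance `R` of `A` pays `W` for every step: too expensive
    push Not at hfar
    refine le_max_of_le_left ?_
    have hm : ∀ i ≤ m, dist x' (q i) ≤ i ∧ W * i + minCost w y' (q i) = minCost w y' x' := by
      intro i
      induction i with
      | zero => intro _; simp [hq0]
      | succ i ih =>
        intro h
        obtain ⟨h1, h2⟩ := ih (by omega)
        obtain ⟨h3, h4⟩ := hq i (by omega)
        have h5 : w (q i) = W := by simp only [hwdef, if_pos (hfar i (by omega))]
        refine ⟨?_, ?_⟩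
        · push_cast
          linarith [dist_triangle x' (q i) (q (i + 1))]
        · rw [h5] at h4
          rw [← h2, h4]; ring
    obtain ⟨h1, h2⟩ := hm m le_rfl
    rw [hqm] at h1 h2
    rw [minCost_self, add_zero] at h2
    have h3 : (W : ℝ) * m = minCost w y' x' := by exact_mod_cast h2
    have h4 : 4 * r ≤ dist x x' + dist x' y' + dist y y' := by
      have e1 := dist_triangle x x' y
      have e2 := dist_triangle x' y' y
      rw [dist_comm y' y] at e2
      have e3 : (4 : ℝ) * r ≤ dist x y := by exact_mod_cast hxy
      linarith
    have h5 : 2 * r - 2 ≤ (m : ℝ) := by linarith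
    have h6 : (W : ℝ) * (2 * r - 2) ≤ W * m := mul_le_mul_of_nonneg_left h5 hW0
    have h7 : (W : ℝ) * R ≤ W * (r / 2) := mul_le_mul_of_nonneg_left (by linarith) hW0
    have h8 : (C + 3) * r ≤ W * r := mul_le_mul_of_nonneg_right hWC hr
    nlinarith

end MorseToCSL

/-- **Characterization of Morse subsets.** A subset of infinite diameter of a geodesic
space is Morse iff the lower relative divergence is completely super linear. -/
theorem morse_iff_lowerRelDiv_completelySuperLinear
    {X : Type*} [MetricSpace X] (hX : IsGeodesicSpace X)
    (A : Set X) (hA : EMetric.diam A = ⊤) :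
    IsMorse A ↔ FamilyCSL (lowerRelDiv A) := by
  have hne : A.Nonempty := by
    by_contra h
    rw [not_nonempty_iff_eq_empty.1 h] at hA
    change Metric.ediam (∅ : Set X) = ⊤ at hA
    simp at hA
  constructor
  · exact fun hM => ⟨4, by norm_num, fun ρ hρ hρ1 => csl_of_isMorse hX hne hM hρ hρ1⟩
  · rintro ⟨n, -, h⟩
    exact isMorse_of_csl hX hne (h 1 one_pos le_rfl)
end
end

section
/- Let G be a group with a finite generating set S and let H be an infinite subgroup of G. Then H is a Morse subset of the Cayley graph Γ(G,S) (i.e., H is strongly quasiconvex in G) if and only if the lower relative divergence div(Γ(G,S),H) is completely super linear. -/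
/-!
Both implications hold for an arbitrary nonempty subset `A` of a geodesic metric space `X`;
neither the group structure nor finiteness of the generating set plays a role.

*Completely super linear divergence implies Morse.* Sample a `(K, C)`-quasi-geodesic with
endpoints on `A` at unit times. If it climbs very high above a level `r₀`, some excursion above
level `r₀` is long compared with `r₀`. As the excursions are bounded, there is a last scale
`r = 2 ^ m * r₀` at which some excursion above level about `r` has length at least `C₁ * r`.
Since no excursion above level `2 r` has length `2 * C₁ * r`, the one above level `r` contains a
stretch of length comparable to `r` whose ends have height `O(r)` (`exists_scale`). Pushing these
ends down to `∂N_r(A)` along geodesics (`exists_push`) gives two points at distance at least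
`n₀ * r` joined outside `N_r(A)` by a path of length `O(r)`, so `σ^{n₀}_1` is not super linear.

*Morse implies completely super linear divergence.* Suppose that `x, y ∈ ∂N_r(A)` with
`d(x, y) ≥ 4 r` are joined outside `N_{ρ r}(A)` by a path of length at most `C r + 1`. Extending
it by geodesics from `x` and `y` to `A` gives a chain of `O(r)` unit steps. Shortcutting by
minimality (`exists_tame`) turns it into a quasi-geodesic with constants depending only on `C`
and `ρ`, within `ρ r / 2` of the original chain. It has to travel from the ball of radius about
`r` around `x` to the one around `y`, and between these balls it is at distance at least
`ρ r / 2` from `A`. The Morse property therefore bounds `r`.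
-/

open Metric Set Pointwise
open scoped ENNReal

noncomputable section

/-! ### Lipschitz paths avoiding a neighbourhood of `A` -/

/-- `x` and `y` are joined by a `1`-Lipschitz path parametrized by an interval of length at
most `L`, all of whose points are at distance at least `r` from `A`. Allowing intervals shorter
than `L` makes the notion monotone in `L`. -/
def LipPath {X : Type*} [MetricSpace X] (A : Set X) (r : ℝ) (x y : X) (L : ℝ) : Prop :=
  ∃ l : ℝ, 0 ≤ l ∧ l ≤ L ∧ ∃ γ : ℝ → X, γ 0 = x ∧ γ l = y ∧
    (∀ s t, 0 ≤ s → s ≤ t → t ≤ l → dist (γ s) (γ t) ≤ t - s) ∧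
    ∀ t ∈ Icc 0 l, r ≤ infDist (γ t) A

lemma LipPath.relPathDist_le {X : Type*} [MetricSpace X] {A : Set X} {r : ℝ} {x y : X} {L : ℝ}
    (h : LipPath A r x y L) : relPathDist A r x y ≤ ENNReal.ofReal L := by
  obtain ⟨l, hl0, hlL, γ, h0, h1, hlip, hr⟩ := h
  have hl : LipschitzOnWith 1 γ (Icc 0 l) := by
    refine LipschitzOnWith.of_dist_le_mul fun s hs t ht => ?_
    rw [NNReal.coe_one, one_mul, Real.dist_eq]
    rcases le_total s t with hst | hst
    · rw [abs_sub_comm, abs_of_nonneg (by linarith)]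
      exact hlip s t hs.1 hst ht.2
    · rw [dist_comm, abs_of_nonneg (by linarith)]
      exact hlip t s ht.1 hst hs.2
  have hv : eVariationOn γ (Icc 0 l) ≤ ENNReal.ofReal L := by
    have h2 := hl.comp_eVariationOn_le (g := id) (s := Icc 0 l) (mapsTo_id _)
    have h3 := (monotoneOn_id (s := Icc (0:ℝ) l)).eVariationOn_eq
      (left_mem_Icc.2 hl0) (right_mem_Icc.2 hl0)
    rw [inter_self] at h3
    have h4 : eVariationOn γ (Icc 0 l) ≤ ENNReal.ofReal l := by
      refine h2.trans ?_
      simp [h3]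
    exact h4.trans (ENNReal.ofReal_le_ofReal hlL)
  exact iInf_le_of_le γ <| iInf_le_of_le 0 <| iInf_le_of_le l <| iInf_le_of_le hl0 <|
    iInf_le_of_le hl.continuousOn <| iInf_le_of_le h0 <| iInf_le_of_le h1 <|
    iInf_le_of_le hr hv

lemma LipPath.symm {X : Type*} [MetricSpace X] {A : Set X} {r : ℝ} {x y : X} {L : ℝ}
    (h : LipPath A r x y L) : LipPath A r y x L := by
  obtain ⟨l, hl0, hlL, γ, h0, h1, hlip, hr⟩ := h
  refine ⟨l, hl0, hlL, fun t => γ (l - t), by simpa, by simpa, fun s t hs hst ht => ?_,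
    fun t ht => hr _ ⟨by linarith [ht.2], by linarith [ht.1]⟩⟩
  rw [dist_comm]
  have := hlip (l - t) (l - s) (by linarith) (by linarith) (by linarith)
  linarith

lemma LipPath.trans {X : Type*} [MetricSpace X] {A : Set X} {r : ℝ} {x y z : X} {L L' : ℝ}
    (h : LipPath A r x y L) (h' : LipPath A r y z L') : LipPath A r x z (L + L') := by
  obtain ⟨l, hl0, hlL, γ, h0, h1, hlip, hr⟩ := h
  obtain ⟨l', hl0', hlL', γ', h0', h1', hlip', hr'⟩ := h'
  refine ⟨l + l', by linarith, by linarith, fun t => if t ≤ l then γ t else γ' (t - l),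
    by simp [hl0, h0], ?_, fun s t hs hst ht => ?_, fun t ht => ?_⟩
  · dsimp only
    split_ifs with hc
    · have : l' = 0 := by linarith
      subst this
      rw [add_zero, h1, ← h1', h0']
    · simpa using h1'
  · dsimp only
    split_ifs with h2 h3 h3
    · exact hlip s t hs hst h3
    · calc dist (γ s) (γ' (t - l)) ≤ dist (γ s) (γ l) + dist (γ l) (γ' (t - l)) :=
            dist_triangle _ _ _
        _ ≤ (l - s) + (t - l - 0) := by
            refine add_le_add (hlip s l hs h2 le_rfl) ?_
            rw [h1, ← h0']
            exact hlip' 0 (t - l) le_rfl (by linarith) (by linarith)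
        _ = t - s := by ring
    · linarith
    · have := hlip' (s - l) (t - l) (by linarith) (by linarith) (by linarith)
      linarith
  · dsimp only
    split_ifs with h2
    · exact hr t ⟨ht.1, h2⟩
    · exact hr' _ ⟨by linarith, by linarith [ht.2]⟩

/-- A geodesic starting at distance at least `r + Λ` from `A` and of length at most `Λ`
stays at distance at least `r` from `A`. -/
lemma lipPath_of_dist_le {X : Type*} [MetricSpace X] (hX : IsGeodesicSpace X) {A : Set X}
    {r Λ : ℝ} {x y : X} (hd : dist x y ≤ Λ) (hx : r + Λ ≤ infDist x A) :
    LipPath A r x y Λ := by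
  obtain ⟨γ, h0, h1, hγ⟩ := hX x y
  refine ⟨dist x y, dist_nonneg, hd, γ, h0, h1, fun s t hs hst ht => ?_, fun t ht => ?_⟩
  · rw [hγ s ⟨hs, by linarith⟩ t ⟨by linarith, ht⟩, abs_sub_comm, abs_of_nonneg (by linarith)]
  · have h2 := hγ 0 ⟨le_rfl, dist_nonneg⟩ t ht
    rw [h0, zero_sub, abs_neg, abs_of_nonneg ht.1] at h2
    have h3 := infDist_le_infDist_add_dist (s := A) (x := x) (y := γ t)
    linarith [ht.2]

lemma lipPath_of_steps {X : Type*} [MetricSpace X] (hX : IsGeodesicSpace X) {A : Set X}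
    {r Λ : ℝ} (p : ℕ → X) (hΛ : 0 ≤ Λ) (i m : ℕ)
    (hd : ∀ k, dist (p k) (p (k + 1)) ≤ Λ)
    (hr : ∀ k, i ≤ k → k ≤ i + m → r + Λ ≤ infDist (p k) A) :
    LipPath A r (p i) (p (i + m)) (Λ * m) := by
  induction m with
  | zero =>
    refine ⟨0, le_rfl, by simp, fun _ => p i, rfl, rfl, fun s t _ hst _ => ?_, fun t _ => ?_⟩
    · simpa using hst
    · linarith [hr i le_rfl le_self_add]
  | succ m ih =>
    have h1 := ih fun k h h' => hr k h (by omega)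
    have h2 := h1.trans (lipPath_of_dist_le hX (hd (i + m)) (hr _ (by omega) (by omega)))
    have h3 : Λ * (m : ℝ) + Λ = Λ * ((m + 1 : ℕ) : ℝ) := by push_cast; ring
    rwa [h3] at h2

/-- A point at distance between `r` and `s` from `A` can be pushed along a geodesic towards `A`
until it first reaches `∂N_r(A)`. -/
lemma exists_push {X : Type*} [MetricSpace X] (hX : IsGeodesicSpace X) {A : Set X}
    (hA : A.Nonempty) {r s : ℝ} (hr : 0 < r) {q : X} (h1 : r ≤ infDist q A)
    (h2 : infDist q A < s) :
    ∃ q' : X, infDist q' A = r ∧ dist q q' ≤ s ∧ LipPath A r q q' s := by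
  obtain ⟨a, ha, hqa⟩ := (infDist_lt_iff hA).1 h2
  obtain ⟨γ, h0, hd, hγ⟩ := hX q a
  have hd0 : 0 ≤ dist q a := dist_nonneg
  have hcont : ContinuousOn γ (Icc 0 (dist q a)) := by
    refine (LipschitzOnWith.of_dist_le_mul (K := 1) fun s hs t ht => ?_).continuousOn
    rw [hγ s hs t ht, NNReal.coe_one, one_mul, Real.dist_eq]
  have hf : ContinuousOn (fun t => infDist (γ t) A) (Icc 0 (dist q a)) :=
    (continuous_infDist_pt A).comp_continuousOn hcont
  have hcomp : IsCompact (Icc 0 (dist q a) ∩ (fun t => infDist (γ t) A) ⁻¹' Iic r) :=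
    isCompact_Icc.of_isClosed_subset
      (hf.preimage_isClosed_of_isClosed isClosed_Icc isClosed_Iic) inter_subset_left
  obtain ⟨t, ⟨htI, htr⟩, hleast⟩ := hcomp.exists_isLeast
    ⟨dist q a, ⟨hd0, le_rfl⟩, by simp [hd, infDist_zero_of_mem ha, hr.le]⟩
  have htr' : infDist (γ t) A ≤ r := htr
  have htt : infDist (γ t) A = r := by
    obtain ⟨u, hu, hur⟩ := intermediate_value_Icc' htI.1
      (hf.mono (Icc_subset_Icc le_rfl htI.2))
      (show r ∈ Icc _ _ from ⟨htr', by simpa [h0] using h1⟩)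
    have hut : t ≤ u := hleast ⟨⟨hu.1, hu.2.trans htI.2⟩, le_of_eq hur⟩
    have : u = t := le_antisymm hu.2 hut
    rw [← this]; exact hur
  have hdist : dist q (γ t) = t := by
    have := hγ 0 ⟨le_rfl, hd0⟩ t htI
    rwa [h0, zero_sub, abs_neg, abs_of_nonneg htI.1] at this
  refine ⟨γ t, htt, by linarith [htI.2], t, htI.1, by linarith [htI.2], γ, h0, rfl,
    fun u v hu huv hv => ?_, fun u hu => ?_⟩
  · rw [hγ u ⟨hu, by linarith [htI.2]⟩ v ⟨by linarith, by linarith [htI.2]⟩, abs_sub_comm,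
      abs_of_nonneg (by linarith)]
  · by_contra! hc
    have : t ≤ u := hleast ⟨⟨hu.1, hu.2.trans htI.2⟩, hc.le⟩
    have : u = t := le_antisymm hu.2 this
    rw [this, htt] at hc
    exact lt_irrefl _ hc

/-! ### Completely super linear divergence implies Morse -/

/-- If an integer-time sequence with steps at most `Λ` in the height `f` starts and ends below
level `s`, a time `k` above level `s` lies in an excursion `[i, j]` above `s`, whose ends are
at height at most `s + Λ`. -/
lemma exists_excursion {f : ℕ → ℝ} {Λ s : ℝ} {N k : ℕ} (hk : k ≤ N)
    (hf : ∀ i, |f (i + 1) - f i| ≤ Λ) (h0 : f 0 < s) (hN : f N < s) (hs : s ≤ f k) :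
    ∃ i j, i ≤ k ∧ k ≤ j ∧ j ≤ N ∧ (∀ l, i ≤ l → l ≤ j → s ≤ f l) ∧
      f i ≤ s + Λ ∧ f j ≤ s + Λ := by
  classical
  have hi : ∃ i, i ≤ k ∧ ∀ l, i ≤ l → l ≤ k → s ≤ f l :=
    ⟨k, le_rfl, fun l h h' => by rwa [le_antisymm h' h]⟩
  have hj : ∃ j, k < j ∧ j ≤ N ∧ f j < s :=
    ⟨N, lt_of_le_of_ne hk (by rintro rfl; linarith), le_rfl, hN⟩
  obtain ⟨hik, hia⟩ := Nat.find_spec hi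
  have himin := fun m => Nat.find_min hi (m := m)
  obtain ⟨hkj, hjN, hjs⟩ := Nat.find_spec hj
  have hjmin := fun m => Nat.find_min hj (m := m)
  set i := Nat.find hi
  set j := Nat.find hj
  refine ⟨i, j - 1, hik, by omega, by omega, fun l h h' => ?_, ?_, ?_⟩
  · rcases le_or_gt l k with hl | hl
    · exact hia l h hl
    · by_contra! hc
      exact hjmin l (by omega) ⟨hl, by omega, hc⟩
  · obtain ⟨i', hi'⟩ : ∃ i', i = i' + 1 := by
      rcases Nat.eq_zero_or_eq_succ_pred i with h | h
      · have := hia i le_rfl hik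
        rw [h] at this
        linarith
      · exact ⟨_, h⟩
    have h1 : f i' < s := by
      by_contra! hc
      refine himin i' (by omega) ⟨by omega, fun l h h' => ?_⟩
      rcases h.eq_or_lt with rfl | h
      · exact hc
      · exact hia l (by omega) h'
    have := (abs_le.1 (hf i')).2
    rw [hi']; linarith
  · obtain ⟨j', hj'⟩ : ∃ j', j = j' + 1 := ⟨j - 1, by omega⟩
    have := (abs_le.1 (hf j')).1
    rw [← hj'] at this
    have h2 : j - 1 = j' := by omega
    rw [h2]; linarith

/-- Given a sequence which climbs very high above a low level `r₀`, there is a scale `r ≥ r₀`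
and a stretch of times of length comparable to `r` (between `C₁ r` and `3 C₁ r + 1`) with all
heights at least `r + Λ` and both ends of height `O(r)`. The scale is the last one of the form
`2 ^ m * r₀` at which some excursion has length at least `C₁` times the scale. -/
lemma exists_scale_s1 {f : ℕ → ℝ} {Λ C₁ r₀ : ℝ} {N k : ℕ} (hk : k ≤ N)
    (hf : ∀ i, |f (i + 1) - f i| ≤ Λ) (h0 : f 0 = 0) (hN : f N = 0) (hΛ : 0 < Λ)
    (hC : 0 < C₁) (hr : Λ < r₀) (hbig : r₀ + 2 * Λ + Λ * (C₁ * r₀) ≤ f k) :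
    ∃ (r : ℝ) (i m : ℕ), r₀ ≤ r ∧ i + m ≤ N ∧ C₁ * r ≤ m ∧ (m : ℝ) ≤ 3 * C₁ * r + 1 ∧
      (∀ l, i ≤ l → l ≤ i + m → r + Λ ≤ f l) ∧ f i ≤ 4 * r ∧ f (i + m) ≤ 4 * r := by
  classical
  let Q : ℝ → Prop := fun r => ∃ i j, i ≤ j ∧ j ≤ N ∧ (∀ l, i ≤ l → l ≤ j → r + Λ ≤ f l) ∧
      f i ≤ r + 2 * Λ ∧ f j ≤ r + 2 * Λ ∧ C₁ * r ≤ (j : ℝ) - i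
  have hr₀ : 0 < r₀ := hΛ.trans hr
  have hgrow : ∀ i d, f (i + d) - f i ≤ Λ * d := by
    intro i d
    induction d with
    | zero => simp
    | succ d ih =>
      have := (abs_le.1 (hf (i + d))).2
      rw [← add_assoc]
      push_cast
      linarith
  have hQ0 : Q ((2 : ℝ) ^ 0 * r₀) := by
    rw [pow_zero, one_mul]
    have hpos : 0 < Λ * (C₁ * r₀) := by positivity
    obtain ⟨i, j, hik, hkj, hjN, hall, hi, hj⟩ := exists_excursion (s := r₀ + Λ) hk hf
      (by linarith) (by linarith) (by linarith)
    refine ⟨i, j, hik.trans hkj, hjN, hall, by linarith, by linarith, ?_⟩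
    have h1 := hgrow i (k - i)
    rw [Nat.add_sub_cancel' hik, Nat.cast_sub hik] at h1
    have h2 : Λ * (C₁ * r₀) ≤ Λ * ((k : ℝ) - i) := by linarith
    have h3 := le_of_mul_le_mul_left h2 hΛ
    have h4 : (k : ℝ) ≤ j := by exact_mod_cast hkj
    linarith
  obtain ⟨m₀, hm₀⟩ : ∃ m : ℕ, ¬ Q ((2 : ℝ) ^ m * r₀) := by
    obtain ⟨m, hm⟩ := pow_unbounded_of_one_lt ((N : ℝ) / (C₁ * r₀)) (one_lt_two)
    refine ⟨m, ?_⟩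
    rintro ⟨i, j, -, hjN, -, -, -, hlen⟩
    rw [div_lt_iff₀ (by positivity)] at hm
    have h1 : (j : ℝ) ≤ N := by exact_mod_cast hjN
    have h2 : (0 : ℝ) ≤ i := Nat.cast_nonneg i
    have h3 : C₁ * ((2 : ℝ) ^ m * r₀) = (2 : ℝ) ^ m * (C₁ * r₀) := by ring
    linarith
  have hex : ∃ m : ℕ, ¬ Q ((2 : ℝ) ^ m * r₀) := ⟨m₀, hm₀⟩
  obtain ⟨m, hm1, hm2⟩ : ∃ m : ℕ, Q ((2 : ℝ) ^ m * r₀) ∧ ¬ Q ((2 : ℝ) ^ (m + 1) * r₀) := by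
    have hspec := Nat.find_spec hex
    have hmin := fun m => Nat.find_min hex (m := m)
    set n := Nat.find hex
    obtain ⟨n', hn'⟩ : ∃ n', n = n' + 1 := by
      rcases Nat.eq_zero_or_eq_succ_pred n with h | h
      · rw [h] at hspec
        exact absurd hQ0 hspec
      · exact ⟨_, h⟩
    exact ⟨n', not_not.1 (hmin n' (by omega)), by rwa [← hn']⟩
  have hpow : (2 : ℝ) ^ (m + 1) * r₀ = 2 * ((2 : ℝ) ^ m * r₀) := by ring
  rw [hpow] at hm2
  have hrr : r₀ ≤ (2 : ℝ) ^ m * r₀ := by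
    have : (1 : ℝ) ≤ 2 ^ m := one_le_pow₀ one_le_two
    nlinarith
  set r := (2 : ℝ) ^ m * r₀
  have hrpos : 0 < r := hr₀.trans_le hrr
  obtain ⟨i, j, hij, hjN, hall, hi, hj, hlen⟩ := hm1
  have hceil := Nat.le_ceil (C₁ * r)
  have hceil' := Nat.ceil_lt_add_one (show 0 ≤ C₁ * r by positivity)
  set c := ⌈C₁ * r⌉₊ with hc
  have hicj : i + c ≤ j := by
    have : c ≤ j - i := by
      rw [hc, Nat.ceil_le, Nat.cast_sub hij]
      exact hlen
    omega
  rcases lt_or_ge (f (i + c)) (2 * r + Λ) with hlow | hhigh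
  · refine ⟨r, i, c, hrr, by omega, hceil, ?_, fun l h h' => hall l h (by omega), by linarith,
      by linarith⟩
    nlinarith [mul_pos hC hrpos]
  · obtain ⟨i', j', hik', hkj', hjN', hall', hi', hj'⟩ := exists_excursion (s := 2 * r + Λ)
      (hicj.trans hjN) hf (by linarith) (by linarith) hhigh
    -- the high excursion cannot outlast the low one, whose right end is below level `2 r + Λ`
    have hj'j : j' < j := by
      by_contra! hcon
      have := hall' j (by omega) hcon
      linarith
    have hshort : (j' : ℝ) - i' < C₁ * (2 * r) := by
      by_contra! hcon
      exact hm2 ⟨i', j', by omega, hjN', hall', by linarith, by linarith, hcon⟩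
    have hi'c : (i' : ℝ) ≤ i + c := by exact_mod_cast hik'
    have hj'c : (i : ℝ) + c ≤ j' := by exact_mod_cast hkj'
    have hsum : i + (j' - i) = j' := by omega
    have hcast : ((j' - i : ℕ) : ℝ) = (j' : ℝ) - i := Nat.cast_sub (by omega)
    refine ⟨r, i, j' - i, hrr, by omega, ?_, ?_, fun l h h' => hall l h (by omega), by linarith,
      ?_⟩
    · rw [hcast]; linarith
    · rw [hcast]; linarith
    · rw [hsum]; linarith

theorem isMorse_of_familyCSL {X : Type*} [MetricSpace X] (hX : IsGeodesicSpace X) {A : Set X}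
    (hA : A.Nonempty) (h : FamilyCSL (lowerRelDiv A)) : IsMorse A := by
  obtain ⟨n₀, -, hn₀⟩ := h
  intro K C hK hC
  set Λ := K + C with hΛ
  have hΛ1 : 1 ≤ Λ := by linarith
  have hΛ0 : 0 < Λ := by linarith
  set C₁ := K * ((n₀ : ℝ) + 12) with hC₁
  have hC₁0 : 0 < C₁ := by positivity
  set Cσ := 10 + Λ * (3 * C₁ + 1) with hCσ
  have hCσ0 : 0 < Cσ := by positivity
  obtain ⟨B, hB⟩ := hn₀ 1 one_pos le_rfl Cσ hCσ0
  set r₀ := max B 0 + Λ + C + 2 with hr₀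
  have hB0 : B ≤ max B 0 := le_max_left _ _
  have hm0 : 0 ≤ max B 0 := le_max_right _ _
  have hr₀0 : 0 < r₀ := by linarith
  have hD : 0 ≤ r₀ + 2 * Λ + Λ * (C₁ * r₀) := by positivity
  refine ⟨r₀ + 2 * Λ + Λ * (C₁ * r₀) + Λ, by linarith, ?_⟩
  intro γ a b hab hγ ha hb t ht
  -- sampling of `γ` at unit times, stopped at `b`
  let u : ℕ → ℝ := fun i => min (a + i) b
  have hu0 : u 0 = a := by simp [u, hab]
  have huI : ∀ i, u i ∈ Icc a b := fun i =>
    ⟨le_min (by linarith [Nat.cast_nonneg (α := ℝ) i]) hab, min_le_right _ _⟩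
  let N : ℕ := ⌈b - a⌉₊
  have hN1 : b - a ≤ N := Nat.le_ceil _
  have hN2 : (N : ℝ) < b - a + 1 := Nat.ceil_lt_add_one (by linarith)
  have huN : u N = b := min_eq_right (by linarith)
  have hulow : ∀ i, i ≤ N → a + i - 1 ≤ u i := fun i hi => by
    have : (i : ℝ) ≤ N := by exact_mod_cast hi
    exact le_min (by linarith) (by linarith)
  have huhigh : ∀ i, u i ≤ a + i := fun i => min_le_left _ _
  have hstep : ∀ s ∈ Icc a b, ∀ t ∈ Icc a b, |s - t| ≤ 1 → dist (γ s) (γ t) ≤ Λ := by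
    intro s hs t ht hst
    have := (hγ s hs t ht).2
    have h1 := mul_le_mul_of_nonneg_left hst (show 0 ≤ K by linarith)
    linarith
  let p : ℕ → X := fun i => γ (u i)
  have hp : ∀ i, dist (p i) (p (i + 1)) ≤ Λ := fun i => by
    refine hstep _ (huI _) _ (huI _) ?_
    refine (abs_min_sub_min_le_max _ _ _ _).trans ?_
    simp
  have hf : ∀ i, |infDist (p (i + 1)) A - infDist (p i) A| ≤ Λ := fun i => by
    have h1 := infDist_le_infDist_add_dist (s := A) (x := p i) (y := p (i + 1))
    have h2 := infDist_le_infDist_add_dist (s := A) (x := p (i + 1)) (y := p i)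
    rw [dist_comm] at h2
    have := hp i
    rw [abs_le]
    constructor <;> linarith
  have key : ∀ k ≤ N, infDist (p k) A < r₀ + 2 * Λ + Λ * (C₁ * r₀) := by
    intro k hk
    by_contra! hbig
    obtain ⟨r, i, m, hr, him, hm1, hm2, hall, hi, hj⟩ := exists_scale_s1
      (f := fun i => infDist (p i) A) hk hf (by simp only [p, hu0]; exact infDist_zero_of_mem ha)
      (by simp only [p, huN]; exact infDist_zero_of_mem hb) hΛ0 hC₁0 (by linarith) hbig
    have hrpos : 0 < r := by linarith
    have hpath := lipPath_of_steps hX p hΛ0.le i m hp hall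
    obtain ⟨x, hxA, hdx, hpx⟩ := exists_push hX hA hrpos (s := 5 * r) (q := p i)
      (by linarith [hall i le_rfl le_self_add]) (by linarith)
    obtain ⟨y, hyA, hdy, hpy⟩ := exists_push hX hA hrpos (s := 5 * r)
      (by linarith [hall (i + m) le_self_add le_rfl])
      (show infDist (p (i + m)) A < 5 * r by linarith)
    have htot := ((hpx.symm.trans hpath).trans hpy).relPathDist_le
    have hlen : 5 * r + Λ * m + 5 * r ≤ Cσ * r := by
      have h1 : Λ * (m : ℝ) ≤ Λ * ((3 * C₁ + 1) * r) := by
        refine mul_le_mul_of_nonneg_left ?_ hΛ0.le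
        linarith
      rw [hCσ]; linarith
    have hdist : (n₀ : ℝ) * r ≤ dist x y := by
      have h1 := (hγ _ (huI i) _ (huI (i + m))).1
      have h2 : (m : ℝ) - 1 ≤ |u i - u (i + m)| := by
        have h3 := hulow (i + m) him
        have h4 := huhigh i
        push_cast at h3
        rw [abs_sub_comm]
        exact le_trans (by linarith) (le_abs_self _)
      have h5 : ((n₀ : ℝ) + 12) * r - 1 ≤ 1 / K * |u i - u (i + m)| := by
        rw [one_div, ← div_eq_inv_mul, le_div_iff₀ (by linarith)]
        have : C₁ * r = ((n₀ : ℝ) + 12) * r * K := by rw [hC₁]; ring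
        linarith
      have h6 : dist (p i) (p (i + m)) ≤ dist (p i) x + dist x y + dist y (p (i + m)) :=
        dist_triangle4 _ _ _ _
      rw [dist_comm y] at h6
      change _ ≤ dist (p i) (p (i + m)) at h1
      linarith
    have hσ : lowerRelDiv A n₀ 1 r ≤ ENNReal.ofReal (Cσ * r) := by
      refine iInf_le_of_le x <| iInf_le_of_le y <| iInf_le_of_le hxA <| iInf_le_of_le hyA <|
        iInf_le_of_le (ne_top_of_le_ne_top ENNReal.ofReal_ne_top htot) <|
        iInf_le_of_le hdist ?_
      rw [one_mul]
      exact htot.trans (ENNReal.ofReal_le_ofReal hlen)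
    have := hB r hrpos.le hσ
    linarith
  have hfl := Nat.floor_le (show 0 ≤ t - a by linarith [ht.1])
  have hfl' := Nat.lt_floor_add_one (t - a)
  have hfN : ⌊t - a⌋₊ ≤ N := (Nat.floor_le_floor (by linarith [ht.2])).trans (Nat.floor_le_ceil _)
  have hk := key _ hfN
  have hut : u ⌊t - a⌋₊ = a + ⌊t - a⌋₊ := min_eq_left (by linarith [ht.2])
  have hd := hstep t ht _ (huI ⌊t - a⌋₊) (by
    rw [hut, abs_le]
    constructor <;> linarith)
  have := infDist_le_infDist_add_dist (s := A) (x := γ t) (y := p ⌊t - a⌋₊)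
  change _ ≤ _ + dist (γ t) (γ (u ⌊t - a⌋₊)) at this
  linarith

/-! ### Discrete chains and shortcutting -/

/-- `x` and `y` are joined by a sequence of `n` steps of length at most `1` through points
satisfying `P`. -/
def Chain {X : Type*} [MetricSpace X] (P : X → Prop) (n : ℕ) (x y : X) : Prop :=
  ∃ p : ℕ → X, p 0 = x ∧ p n = y ∧ (∀ i < n, dist (p i) (p (i + 1)) ≤ 1) ∧ ∀ i ≤ n, P (p i)

lemma Chain.mono {X : Type*} [MetricSpace X] {P Q : X → Prop} {n : ℕ} {x y : X}
    (h : Chain P n x y) (hPQ : ∀ z, P z → Q z) : Chain Q n x y := by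
  obtain ⟨p, h0, h1, h2, h3⟩ := h
  exact ⟨p, h0, h1, h2, fun i hi => hPQ _ (h3 i hi)⟩

lemma Chain.trans {X : Type*} [MetricSpace X] {P : X → Prop} {n m : ℕ} {x y z : X}
    (h : Chain P n x y) (h' : Chain P m y z) : Chain P (n + m) x z := by
  obtain ⟨p, h0, h1, h2, h3⟩ := h
  obtain ⟨q, k0, k1, k2, k3⟩ := h'
  refine ⟨fun i => if i ≤ n then p i else q (i - n), by simp [h0], ?_, fun i hi => ?_,
    fun i hi => ?_⟩
  · dsimp only
    split_ifs with hc
    · have : m = 0 := by omega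
      subst this
      rw [add_zero, h1, ← k0, k1]
    · simpa using k1
  · dsimp only
    rcases lt_trichotomy i n with hin | rfl | hin
    · rw [if_pos hin.le, if_pos (show i + 1 ≤ n from hin)]
      exact h2 i hin
    · rw [if_pos le_rfl, if_neg (by omega), h1, ← k0]
      simpa using k2 0 (by omega)
    · rw [if_neg (by omega), if_neg (by omega)]
      have := k2 (i - n) (by omega)
      rwa [show i - n + 1 = i + 1 - n by omega] at this
  · dsimp only
    split_ifs with hc
    · exact h3 i hc
    · exact k3 _ (by omega)

lemma chain_of_seq {X : Type*} [MetricSpace X] {P : X → Prop} {n : ℕ} {p : ℕ → X}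
    (h2 : ∀ i < n, dist (p i) (p (i + 1)) ≤ 1) (h3 : ∀ i ≤ n, P (p i)) {i j : ℕ}
    (hij : i ≤ j) (hj : j ≤ n) : Chain P (j - i) (p i) (p j) :=
  ⟨fun k => p (i + k), rfl, by simp [Nat.add_sub_cancel' hij],
    fun k hk => by simpa [add_assoc] using h2 (i + k) (by omega), fun k hk => h3 _ (by omega)⟩

lemma chain_geodesic {X : Type*} [MetricSpace X] (hX : IsGeodesicSpace X) (x y : X) :
    Chain (fun z => dist x z ≤ dist x y ∧ dist y z ≤ dist x y) ⌈dist x y⌉₊ x y := by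
  obtain ⟨γ, h0, h1, hγ⟩ := hX x y
  have hI : ∀ i : ℕ, min (i : ℝ) (dist x y) ∈ Icc 0 (dist x y) := fun i =>
    ⟨le_min (Nat.cast_nonneg i) dist_nonneg, min_le_right _ _⟩
  refine ⟨fun i => γ (min i (dist x y)), by simp [h0], ?_, fun i _ => ?_, fun i _ => ⟨?_, ?_⟩⟩
  · dsimp only
    rw [min_eq_right (Nat.le_ceil _), h1]
  · rw [hγ _ (hI i) _ (hI (i + 1))]
    refine (abs_min_sub_min_le_max _ _ _ _).trans ?_
    simp
  · have := hγ 0 ⟨le_rfl, dist_nonneg⟩ _ (hI i)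
    rw [h0, zero_sub, abs_neg, abs_of_nonneg (hI i).1] at this
    dsimp only
    rw [this]
    exact (hI i).2
  · have := hγ (dist x y) ⟨dist_nonneg, le_rfl⟩ _ (hI i)
    rw [h1, abs_of_nonneg (sub_nonneg.2 (hI i).2)] at this
    dsimp only
    rw [this]
    exact sub_le_self _ (hI i).1

/-- A continuous path of length `V` is traced by a chain of at most `2 V + 1` steps: in a fine
subdivision, a step is taken each time the length travelled since the last one exceeds `1 / 2`. -/
lemma chain_of_path {X : Type*} [MetricSpace X] {P : X → Prop} {γ : ℝ → X} {a b V : ℝ}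
    (hab : a ≤ b) (hγ : ContinuousOn γ (Icc a b)) (hV0 : 0 ≤ V)
    (hV : eVariationOn γ (Icc a b) ≤ ENNReal.ofReal V) (hP : ∀ t ∈ Icc a b, P (γ t)) :
    ∃ m : ℕ, (m : ℝ) ≤ 2 * V + 1 ∧ Chain P m (γ a) (γ b) := by
  have huc := isCompact_Icc.uniformContinuousOn_of_continuous hγ
  rw [Metric.uniformContinuousOn_iff] at huc
  obtain ⟨δ, hδ, hδ'⟩ := huc (1 / 2) (by norm_num)
  let u : ℕ → ℝ := fun i => min (a + i * (δ / 2)) b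
  have hu0 : u 0 = a := by simp [u, hab]
  have humono : Monotone u := fun i j hij => by
    have : (i : ℝ) ≤ j := by exact_mod_cast hij
    exact min_le_min_right _ (by nlinarith)
  have huI : ∀ i, u i ∈ Icc a b := fun i => ⟨le_min (by simp; positivity) hab, min_le_right _ _⟩
  let N : ℕ := ⌈(b - a) / (δ / 2)⌉₊
  have huN : u N = b := by
    have := Nat.le_ceil ((b - a) / (δ / 2))
    rw [div_le_iff₀ (by positivity)] at this
    exact min_eq_right (sub_le_iff_le_add'.1 this)
  have hsmall : ∀ i, dist (γ (u i)) (γ (u (i + 1))) ≤ 1 / 2 := fun i => by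
    refine (hδ' _ (huI i) _ (huI (i + 1)) ?_).le
    rw [Real.dist_eq]
    refine (abs_min_sub_min_le_max _ _ _ _).trans_lt ?_
    have h1 : a + (i : ℝ) * (δ / 2) - (a + ((i + 1 : ℕ) : ℝ) * (δ / 2)) = -(δ / 2) := by
      push_cast; ring
    rw [h1, abs_neg, abs_of_pos (by positivity), sub_self, abs_zero]
    exact max_lt (by linarith) hδ
  let q : ℕ → X := fun i => γ (u i)
  let S : ℕ → ℝ := fun n => ∑ i ∈ Finset.range n, dist (q i) (q (i + 1))
  have hS : ∀ n, S n ≤ V := fun n => by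
    have h1 := (eVariationOn.sum_le (f := γ) (n := n) humono huI).trans hV
    have h2 : ENNReal.ofReal (S n) ≤ ENNReal.ofReal V := by
      refine le_trans (le_of_eq ?_) h1
      simp only [S]
      rw [ENNReal.ofReal_sum_of_nonneg fun _ _ => dist_nonneg]
      refine Finset.sum_congr rfl fun i _ => ?_
      rw [← edist_dist, edist_comm]
    exact (ENNReal.ofReal_le_ofReal_iff hV0).1 h2
  have hSd : ∀ j n, j ≤ n → dist (q j) (q n) ≤ S n - S j := fun j n hjn => by
    have := dist_le_Ico_sum_dist q hjn
    rwa [Finset.sum_Ico_eq_sub _ hjn] at this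
  have hstep : ∀ x y : X, P x → P y → dist x y ≤ 1 → Chain P 1 x y := fun x y hx hy hd =>
    ⟨fun i => if i = 0 then x else y, by simp, by simp,
      fun i hi => by
        have : i = 0 := by omega
        subst this
        simpa using hd, fun i _ => by dsimp only; split_ifs <;> assumption⟩
  have hPq : ∀ i, P (q i) := fun i => hP _ (huI i)
  have main : ∀ n, ∃ j ≤ n, ∃ m : ℕ, (m : ℝ) ≤ 2 * S j ∧ Chain P m (q 0) (q j) ∧
      S n - S j ≤ 1 / 2 := by
    intro n
    induction n with
    | zero =>
      exact ⟨0, le_rfl, 0, by simp [S], ⟨fun _ => q 0, rfl, rfl, fun i hi => by omega,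
        fun _ _ => hPq 0⟩, by simp⟩
    | succ n ih =>
      obtain ⟨j, hjn, m, hm, hc, hSj⟩ := ih
      by_cases hcase : S (n + 1) - S j ≤ 1 / 2
      · exact ⟨j, by omega, m, hm, hc, hcase⟩
      · have h1 : S (n + 1) = S n + dist (q n) (q (n + 1)) := Finset.sum_range_succ _ _
        have h2 : dist (q n) (q (n + 1)) ≤ 1 / 2 := hsmall n
        have h3 := hSd j (n + 1) (by omega)
        refine ⟨n + 1, le_rfl, m + 1, ?_,
          hc.trans (hstep _ _ (hPq _) (hPq _) (by linarith)), by simp⟩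
        push_cast
        linarith
  obtain ⟨j, hjN, m, hm, hc, hSj⟩ := main N
  refine ⟨m + 1, ?_, ?_⟩
  · push_cast
    linarith [hS j]
  · have h1 := hSd j N hjN
    have := hc.trans (hstep _ _ (hPq j) (hPq N) (by linarith))
    simpa only [q, hu0, huN] using this

/-- Shortcutting a chain of `T` steps yields a sequence with the same endpoints which is
quasi-geodesic with constants depending only on `lam`, and which stays within `T / lam` of the
original chain. Here `P e` plays the role of the `e`-neighbourhood of the original chain.

The sequence is a chain with `n` minimal among those contained in `P ((T - n) / lam)`: replacing
a stretch of `k` steps by a geodesic with `m` steps moves points by at most `m`, and the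
allowance grows by `(k - m) / lam ≥ m` unless `k < (lam + 1) * m`. -/
lemma exists_tame {X : Type*} [MetricSpace X] (hX : IsGeodesicSpace X) {P : ℝ → X → Prop}
    (hP : ∀ e e' z w, P e z → e + dist z w ≤ e' → P e' w) {T : ℕ} {a b : X}
    (h : Chain (P 0) T a b) {lam : ℝ} (hl : 0 < lam) :
    ∃ (n : ℕ) (p : ℕ → X), p 0 = a ∧ p n = b ∧ (∀ i < n, dist (p i) (p (i + 1)) ≤ 1) ∧
      (∀ i ≤ n, P (T / lam) (p i)) ∧
      ∀ i j, i ≤ j → j ≤ n → (j : ℝ) - i ≤ (lam + 1) * (dist (p i) (p j) + 1) := by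
  classical
  have hex : ∃ n : ℕ, Chain (P (((T : ℝ) - n) / lam)) n a b := ⟨T, by simpa using h⟩
  have hspec := Nat.find_spec hex
  have hmin := fun m => Nat.find_min hex (m := m)
  set n := Nat.find hex
  have hmonoP : ∀ e e' z, e ≤ e' → P e z → P e' z := fun e e' z hee hz =>
    hP e e' z z hz (by simpa using hee)
  obtain ⟨p, h0, h1, h2, h3⟩ := hspec
  refine ⟨n, p, h0, h1, h2, fun i hi => hmonoP _ _ _ ?_ (h3 i hi), fun i j hij hj => ?_⟩
  · exact div_le_div_of_nonneg_right (by linarith [Nat.cast_nonneg (α := ℝ) n]) hl.le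
  · by_contra! hc
    set d := dist (p i) (p j) with hd
    have hd0 : 0 ≤ d := dist_nonneg
    have hm1 : d ≤ ⌈d⌉₊ := Nat.le_ceil d
    have hm2 : (⌈d⌉₊ : ℝ) < d + 1 := Nat.ceil_lt_add_one hd0
    have hgeo := chain_geodesic hX (p i) (p j)
    rw [← hd] at hgeo
    set m := ⌈d⌉₊
    have hm0 : (0 : ℝ) ≤ m := Nat.cast_nonneg m
    have hkm : (lam + 1) * (m : ℝ) ≤ j - i := by nlinarith
    have hmlt : m + i < j := by
      have : (m : ℝ) + i < j := by nlinarith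
      exact_mod_cast this
    have hn' : (((i - 0) + m + (n - j) : ℕ) : ℝ) = n - (j - i) + m := by
      rw [Nat.cast_add, Nat.cast_add, Nat.cast_sub hj, Nat.sub_zero]; ring
    have hgain : ((T : ℝ) - n) / lam + m ≤
        ((T : ℝ) - ((i - 0) + m + (n - j) : ℕ)) / lam := by
      rw [hn', ← sub_nonneg]
      have : ((T : ℝ) - (n - (j - i) + m)) / lam - (((T : ℝ) - n) / lam + m)
          = (j - i - (lam + 1) * m) / lam := by
        field_simp
        ring
      rw [this]
      exact div_nonneg (by linarith) hl.le
    refine hmin ((i - 0) + m + (n - j)) (by omega) ?_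
    have hc1 := (chain_of_seq h2 h3 (Nat.zero_le i) (hij.trans hj)).mono
      fun z hz => hmonoP _ _ z (by linarith) hz
    have hc3 := (chain_of_seq h2 h3 hj le_rfl).mono
      fun z hz => hmonoP _ _ z (by linarith) hz
    have hc2 := hgeo.mono fun z hz =>
      hP _ _ (p i) z (h3 i (hij.trans hj)) (le_trans (by linarith [hz.1]) hgain)
    rw [h0] at hc1
    rw [h1] at hc3
    exact (hc1.trans hc2).trans hc3

/-! ### Morse implies completely super linear divergence -/

lemma qiEmbedOn_floor {X : Type*} [MetricSpace X] {n : ℕ} {p : ℕ → X} {K : ℝ} (hK : 1 ≤ K)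
    (h1 : ∀ i < n, dist (p i) (p (i + 1)) ≤ 1)
    (h2 : ∀ i j, i ≤ j → j ≤ n → (j : ℝ) - i ≤ K * (dist (p i) (p j) + 1)) :
    QIEmbedOn (fun t : ℝ => p ⌊t⌋₊) (Icc 0 (n : ℝ)) K 2 := by
  have hup : ∀ i j, i ≤ j → j ≤ n → dist (p i) (p j) ≤ (j : ℝ) - i := by
    intro i j hij hj
    have := dist_le_Ico_sum_of_dist_le (f := p) hij (d := fun _ => 1)
      fun {k} _ hk => h1 k (by omega)
    simpa [Nat.cast_sub hij] using this
  have main : ∀ s t : ℝ, 0 ≤ s → s ≤ t → t ≤ n →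
      (1 / K) * (t - s) - 2 ≤ dist (p ⌊s⌋₊) (p ⌊t⌋₊) ∧
        dist (p ⌊s⌋₊) (p ⌊t⌋₊) ≤ K * (t - s) + 2 := by
    intro s t hs hst ht
    have hij : ⌊s⌋₊ ≤ ⌊t⌋₊ := Nat.floor_le_floor hst
    have hjn : ⌊t⌋₊ ≤ n := Nat.floor_le_of_le ht
    have a1 := Nat.floor_le hs
    have a2 := Nat.lt_floor_add_one s
    have a3 := Nat.floor_le (hs.trans hst)
    have a4 := Nat.lt_floor_add_one t
    have b1 := hup _ _ hij hjn
    have b2 := h2 _ _ hij hjn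
    constructor
    · have : 1 / K * (t - s) ≤ dist (p ⌊s⌋₊) (p ⌊t⌋₊) + 2 := by
        rw [one_div, ← div_eq_inv_mul, div_le_iff₀ (by linarith)]
        linarith
      linarith
    · nlinarith
  intro s hs t ht
  rcases le_total s t with hst | hst
  · rw [abs_sub_comm, abs_of_nonneg (sub_nonneg.2 hst)]
    exact main s t hs.1 hst ht.2
  · rw [abs_of_nonneg (sub_nonneg.2 hst), dist_comm]
    exact main t s ht.1 hst hs.2

theorem familyCSL_of_isMorse {X : Type*} [MetricSpace X] (hX : IsGeodesicSpace X) {A : Set X}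
    (hA : A.Nonempty) (h : IsMorse A) : FamilyCSL (lowerRelDiv A) := by
  refine ⟨4, by norm_num, fun ρ hρ hρ1 C hC => ?_⟩
  set lam := 2 * (2 * C + 9) / ρ with hlam
  have hlam0 : 0 < lam := by positivity
  obtain ⟨M, -, hM⟩ := h (lam + 1) 2 (by linarith) (by norm_num)
  refine ⟨max 4 (2 * M / ρ), fun r hr0 hσ => ?_⟩
  by_contra! hr
  have hr4 : 4 < r := (le_max_left _ _).trans_lt hr
  have hrM : 2 * M / ρ < r := (le_max_right _ _).trans_lt hr
  rw [div_lt_iff₀ hρ] at hrM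
  have hlt : lowerRelDiv A 4 ρ r < ENNReal.ofReal (C * r + 1) :=
    hσ.trans_lt ((ENNReal.ofReal_lt_ofReal_iff (by positivity)).2 (by linarith))
  simp only [lowerRelDiv, relPathDist, iInf_lt_iff] at hlt
  obtain ⟨x, y, hx, hy, -, hxy, γ, s, t, hst, hγ, hγs, hγt, hγA, hV⟩ := hlt
  obtain ⟨a, ha, hxa⟩ := (infDist_lt_iff hA).1 (show infDist x A < r + 1 by linarith)
  obtain ⟨b, hb, hyb⟩ := (infDist_lt_iff hA).1 (show infDist y A < r + 1 by linarith)
  let P : ℝ → X → Prop := fun e z =>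
    dist x z ≤ r + 1 + e ∨ dist y z ≤ r + 1 + e ∨ ρ * r - e ≤ infDist z A
  have hP : ∀ e e' z w, P e z → e + dist z w ≤ e' → P e' w := by
    rintro e e' z w (hz | hz | hz) he
    · left; linarith [dist_triangle x z w]
    · right; left; linarith [dist_triangle y z w]
    · right; right; linarith [infDist_le_infDist_add_dist (s := A) (x := z) (y := w)]
  obtain ⟨m, hm, hc⟩ := chain_of_path (P := P 0) hst hγ (V := C * r + 1) (by positivity) hV.le
    fun u hu => by right; right; linarith [hγA u hu]
  rw [hγs, hγt] at hc
  have hc1 := (chain_geodesic hX a x).mono (Q := P 0) fun z hz => by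
    left
    linarith [hz.2, dist_comm a x]
  have hc3 := (chain_geodesic hX y b).mono (Q := P 0) fun z hz => by
    right; left
    linarith [hz.1]
  have hn1 := Nat.ceil_lt_add_one (dist_nonneg (x := a) (y := x))
  have hn3 := Nat.ceil_lt_add_one (dist_nonneg (x := y) (y := b))
  have hax : dist a x < r + 1 := by rwa [dist_comm]
  obtain ⟨n, p, hp0, hpn, hp1, hpP, hpq⟩ := exists_tame hX hP ((hc1.trans hc).trans hc3) hlam0
  set T := ⌈dist a x⌉₊ + m + ⌈dist y b⌉₊ with hT
  have hTle : (T : ℝ) ≤ (2 * C + 9) * r := by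
    rw [hT]; push_cast; nlinarith
  have he : (T : ℝ) / lam ≤ ρ * r / 2 := by
    rw [div_le_iff₀ hlam0]
    have : ρ * r / 2 * lam = (2 * C + 9) * r := by
      rw [hlam]; field_simp
    linarith
  have he0 : 0 ≤ (T : ℝ) / lam := by positivity
  set e := (T : ℝ) / lam
  have her : e ≤ r / 2 := by nlinarith
  push_cast at hxy
  have hex : ∃ k, r + 1 + e < dist x (p k) := ⟨n, by
    rw [hpn]; linarith [dist_triangle_right x y b]⟩
  have hkle : Nat.find hex ≤ n := Nat.find_min' hex (by
    rw [hpn]; linarith [dist_triangle_right x y b])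
  have hk := Nat.find_spec hex
  have hkmin := fun m => Nat.find_min hex (m := m)
  set k := Nat.find hex
  -- `p k` is the first point outside the ball around `x`, and is still too close to `x` to lie in
  -- the ball around `y`; so it is near the part of the chain that avoids a neighbourhood of `A`
  obtain ⟨k', hk'⟩ : ∃ k', k = k' + 1 := by
    rcases Nat.eq_zero_or_eq_succ_pred k with h | h
    · rw [h, hp0] at hk
      linarith
    · exact ⟨_, h⟩
  have h1 := not_lt.1 (hkmin k' (by omega))
  have h2 := hp1 k' (by omega)
  rw [← hk'] at h2
  have h3 : ρ * r - e ≤ infDist (p k) A := by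
    rcases hpP k hkle with h | h | h
    · linarith
    · linarith [dist_triangle x (p k') (p k), dist_triangle_right x y (p k)]
    · exact h
  have h4 := hM (fun t : ℝ => p ⌊t⌋₊) 0 n (Nat.cast_nonneg n)
    (qiEmbedOn_floor (by linarith) hp1 hpq) (by simpa [hp0] using ha) (by simpa [hpn] using hb)
    k ⟨Nat.cast_nonneg k, by exact_mod_cast hkle⟩
  simp only [Nat.floor_natCast] at h4
  linarith

/-- **Characterization of strongly quasiconvex subgroups.** An infinite subgroup `H` of a
finitely generated group `G` is a Morse subset of the Cayley graph `Γ(G,S)` iff the lower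
relative divergence of `Γ(G,S)` with respect to `H` is completely super linear. -/
theorem stronglyQuasiconvex_iff_lowerRelDiv_completelySuperLinear
    {G : Type*} [Group G] (S : Set G) (hS : S.Finite) (hgen : Subgroup.closure S = ⊤)
    (H : Subgroup G) (hinf : (H : Set G).Infinite)
    (X : Type*) [MetricSpace X] (ι : G → X) (hmodel : CayleyModel G S X ι) :
    IsMorse (ι '' (H : Set G)) ↔ FamilyCSL (lowerRelDiv (ι '' (H : Set G))) := by
  have hA : (ι '' (H : Set G)).Nonempty := ⟨ι 1, 1, H.one_mem, rfl⟩
  exact ⟨familyCSL_of_isMorse hmodel.1 hA, isMorse_of_familyCSL hmodel.1 hA⟩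
end
end

section
/- Let Φ : A → X be a quasi-isometric embedding between geodesic metric spaces. Then A is stable in X (i.e., for all K ≥ 1, L ≥ 0 there is R = R(K,L) ≥ 0 such that any two (K,L)-quasi-geodesics in X with the same endpoints in Φ(A) are at Hausdorff distance less than R) if and only if Φ(A) is a Morse subset of X and A is a hyperbolic metric space. -/
/-!
The theorem rests on the stability of quasi-geodesics in a hyperbolic geodesic space (the Morse
lemma), and on a converse: stability forces triangles to be thin.

*Stable implies Morse.* A quasi-geodesic of `X` with endpoints `Φ p`, `Φ q` is compared with the
quasi-geodesic `Φ ∘ α`, where `α` is a geodesic of `A` from `p` to `q`.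

*Stable implies hyperbolic.* Given a triangle `x, y, z` in `A`, let `w` be a point of the side
`[x, z]` closest to `y`. Then `[y, w] ∪ [w, x]` is a `(3, 0)`-quasi-geodesic
(`qi_concat`), so its image in `X` is close to that of `[y, x]`; likewise `[w, z]` is close to
`[y, z]` (`near_of_closest`).

*Morse and hyperbolic imply stable.* A coarse nearest-point map `π : X → A` turns a quasi-geodesic
of `X` which stays near `Φ(A)` into a quasi-geodesic of `A` (`qi_proj`). Two quasi-geodesics with
common endpoints project to quasi-geodesics of `A` with common endpoints, both of which are close
to the same geodesic by the Morse lemma.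

*Morse lemma.* Bisecting the parameter interval shows that a geodesic between two points of a
coarsely Lipschitz path `c` is within a distance of `c` logarithmic in the parameter difference
(`log_near`). Let `p` be the point of the geodesic `[c a, c b]` furthest from `c`, at distance
about `E`. Points `y`, `z` at distance `2E` from `p` on either side are `E`-close to points
`c u₁`, `c u₂`, whose parameters differ by `O(E)`; thinness of the quadrilateral
`y, c u₁, c u₂, z` gives `E = O(log E)`, hence a bound on `E` (`geodesic_near_qg`). Conversely, by
connectedness, some point of the geodesic is close to `c s` and to `c t` with `s ≤ u ≤ t`; then
`t - s` is bounded and `c u` is close to that point (`qg_near_geodesic`).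
-/

open Metric Set Pointwise
open scoped ENNReal

noncomputable section

namespace StableMorse

/-! ### Geodesic segments -/

section Segments

variable {X : Type*} [MetricSpace X]

lemma exists_seg (hX : IsGeodesicSpace X) (x y : X) : ∃ S : Set X, IsGeodesicSegment S x y := by
  obtain ⟨γ, h0, h1, h2⟩ := hX x y
  exact ⟨_, γ, h0, h1, rfl, h2⟩

lemma seg_symm {S : Set X} {x y : X} (h : IsGeodesicSegment S x y) : IsGeodesicSegment S y x := by
  obtain ⟨γ, h0, h1, rfl, h2⟩ := h
  refine ⟨fun t => γ (dist x y - t), by simpa using h1, by simpa [dist_comm y x] using h0, ?_, ?_⟩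
  · ext p
    constructor
    · rintro ⟨t, ht, rfl⟩
      refine ⟨dist x y - t, ?_, by simp⟩
      rw [dist_comm y x]
      exact ⟨by linarith [ht.2], by linarith [ht.1]⟩
    · rintro ⟨t, ht, rfl⟩
      rw [dist_comm y x] at ht
      exact ⟨dist x y - t, ⟨by linarith [ht.2], by linarith [ht.1]⟩, rfl⟩
  · intro u hu v hv
    rw [dist_comm y x] at hu hv
    rw [h2 _ ⟨by linarith [hu.2], by linarith [hu.1]⟩ _ ⟨by linarith [hv.2], by linarith [hv.1]⟩,
      abs_sub_comm]
    congr 1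
    ring

lemma seg_sub {g : ℝ → X} {a b : ℝ} (hab : a ≤ b)
    (hg : ∀ s ∈ Icc a b, ∀ t ∈ Icc a b, dist (g s) (g t) = |s - t|) :
    IsGeodesicSegment (g '' Icc a b) (g a) (g b) := by
  have hd : dist (g a) (g b) = b - a := by
    rw [hg a ⟨le_rfl, hab⟩ b ⟨hab, le_rfl⟩, abs_sub_comm, abs_of_nonneg (by linarith)]
  refine ⟨fun t => g (a + t), by simp, by simp [hd], ?_, ?_⟩
  · rw [hd]
    ext p
    constructor
    · rintro ⟨t, ht, rfl⟩
      exact ⟨t - a, ⟨by linarith [ht.1], by linarith [ht.2]⟩, by simp⟩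
    · rintro ⟨t, ht, rfl⟩
      exact ⟨a + t, ⟨by linarith [ht.1], by linarith [ht.2]⟩, rfl⟩
  · intro u hu v hv
    rw [hd] at hu hv
    rw [hg _ ⟨by linarith [hu.1], by linarith [hu.2]⟩ _ ⟨by linarith [hv.1], by linarith [hv.2]⟩]
    congr 1
    ring

lemma seg_dist_le {S : Set X} {x y p : X} (h : IsGeodesicSegment S x y) (hp : p ∈ S) :
    dist x p ≤ dist x y := by
  obtain ⟨γ, h0, h1, rfl, h2⟩ := h
  obtain ⟨t, ht, rfl⟩ := hp
  have := h2 0 ⟨le_rfl, dist_nonneg⟩ t ht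
  rw [h0] at this
  rw [this, abs_sub_comm, sub_zero, abs_of_nonneg ht.1]
  exact ht.2

lemma seg_left_mem {S : Set X} {x y : X} (h : IsGeodesicSegment S x y) : x ∈ S := by
  obtain ⟨γ, h0, h1, rfl, h2⟩ := h
  exact ⟨0, ⟨le_rfl, dist_nonneg⟩, h0⟩

lemma continuousOn_of_isom {g : ℝ → X} {s : Set ℝ}
    (hg : ∀ u ∈ s, ∀ v ∈ s, dist (g u) (g v) = |u - v|) : ContinuousOn g s := by
  have : LipschitzOnWith 1 g s := by
    refine LipschitzOnWith.of_dist_le_mul fun u hu v hv => ?_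
    rw [hg u hu v hv, NNReal.coe_one, one_mul, Real.dist_eq]
  exact this.continuousOn

/-- Triangles are `δ`-thin, with the distance to the other two sides attained by a point. -/
def Thin (X : Type*) [MetricSpace X] (δ : ℝ) : Prop :=
  ∀ x y z : X, ∀ s₁ s₂ s₃ : Set X,
    IsGeodesicSegment s₁ x y → IsGeodesicSegment s₂ y z → IsGeodesicSegment s₃ x z →
    ∀ p ∈ s₃, ∃ q ∈ s₁ ∪ s₂, dist p q ≤ δ

lemma exists_thin (h : IsHyperbolic X) : ∃ δ : ℝ, 0 ≤ δ ∧ Thin X δ := by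
  obtain ⟨δ, hδ, h⟩ := h
  refine ⟨δ + 1, by linarith, fun x y z s₁ s₂ s₃ h₁ h₂ h₃ p hp => ?_⟩
  have := h x y z s₁ s₂ s₃ h₁ h₂ h₃ p hp
  obtain ⟨q, hq, hq'⟩ := (infDist_lt_iff (s := s₁ ∪ s₂) (r := δ + 1)
    ⟨x, Or.inl (seg_left_mem h₁)⟩).1 (by linarith)
  exact ⟨q, hq, hq'.le⟩

end Segments

/-! ### Quasi-geodesics -/

section QuasiGeodesics

variable {X : Type*} [MetricSpace X]

lemma qi_mono {γ : ℝ → X} {s : Set ℝ} {K L K' L' : ℝ} (hK : 1 ≤ K) (hKK : K ≤ K') (hLL : L ≤ L')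
    (h : QIEmbedOn γ s K L) : QIEmbedOn γ s K' L' := by
  intro a ha b hb
  obtain ⟨h1, h2⟩ := h a ha b hb
  have h3 : 1 / K' ≤ 1 / K := one_div_le_one_div_of_le (by linarith) hKK
  have h4 := abs_nonneg (a - b)
  constructor
  · nlinarith
  · nlinarith

lemma qi_lower {γ : ℝ → X} {s : Set ℝ} {K L : ℝ} (hK : 1 ≤ K)
    (h : QIEmbedOn γ s K L) {u v : ℝ} (hu : u ∈ s) (hv : v ∈ s) :
    |u - v| ≤ K * (dist (γ u) (γ v) + L) := by
  have h1 := (h u hu v hv).1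
  have hK0 : 0 < K := by linarith
  have h2 : 1 / K * |u - v| ≤ dist (γ u) (γ v) + L := by linarith
  have h3 := mul_le_mul_of_nonneg_left h2 hK0.le
  have h4 : K * (1 / K * |u - v|) = |u - v| := by field_simp
  linarith

lemma qi_of_isom {g : ℝ → X} {s : Set ℝ}
    (hg : ∀ u ∈ s, ∀ v ∈ s, dist (g u) (g v) = |u - v|) : QIEmbedOn g s 1 0 := by
  intro u hu v hv
  rw [hg u hu v hv]
  constructor <;> simp

lemma qi_comp {A : Type*} [MetricSpace A] {Φ : A → X} {K₀ L₀ K : ℝ}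
    (hΦ : QIEmbeddingWith Φ K₀ L₀) {γ : ℝ → A} {s : Set ℝ}
    (h : QIEmbedOn γ s K 0) : QIEmbedOn (Φ ∘ γ) s (K₀ * K) L₀ := by
  obtain ⟨hK0, hL0, hΦ⟩ := hΦ
  intro u hu v hv
  obtain ⟨h1, h2⟩ := h u hu v hv
  obtain ⟨h3, h4⟩ := hΦ (γ u) (γ v)
  have h5 : 1 / (K₀ * K) * |u - v| = 1 / K₀ * (1 / K * |u - v|) := by
    rw [one_div, one_div, one_div, mul_inv, mul_assoc]
  have h6 : 0 ≤ 1 / K₀ := by positivity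
  simp only [Function.comp]
  constructor
  · rw [h5]; nlinarith
  · nlinarith

lemma qi_bounded {γ : ℝ → X} {a b K L : ℝ} (hK : 1 ≤ K)
    (h : QIEmbedOn γ (Icc a b) K L) : Bornology.IsBounded (γ '' Icc a b) := by
  rw [Metric.isBounded_iff]
  refine ⟨K * (b - a) + L, ?_⟩
  rintro _ ⟨u, hu, rfl⟩ _ ⟨v, hv, rfl⟩
  have h1 := (h u hu v hv).2
  have h2 : |u - v| ≤ b - a := abs_le.2 ⟨by linarith [hu.1, hv.2], by linarith [hu.2, hv.1]⟩
  nlinarith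

/-- Points of one quasi-geodesic are `R`-close to another one at Hausdorff distance less than `R`:
both images are bounded and nonempty, so the distance is not a junk value. -/
lemma exists_near_of_hausdorff {γ γ' : ℝ → X} {a b a' b' K L R : ℝ} (hK : 1 ≤ K)
    (hab : a ≤ b) (hab' : a' ≤ b')
    (h : QIEmbedOn γ (Icc a b) K L) (h' : QIEmbedOn γ' (Icc a' b') K L)
    (hR : hausdorffDist (γ '' Icc a b) (γ' '' Icc a' b') < R) {t : ℝ} (ht : t ∈ Icc a b) :
    ∃ t' ∈ Icc a' b', dist (γ t) (γ' t') < R := by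
  have hfin : hausdorffEDist (γ '' Icc a b) (γ' '' Icc a' b') ≠ ⊤ :=
    hausdorffEDist_ne_top_of_nonempty_of_bounded ((nonempty_Icc.2 hab).image _)
      ((nonempty_Icc.2 hab').image _) (qi_bounded hK h) (qi_bounded hK h')
  obtain ⟨_, ⟨t', ht', rfl⟩, hd⟩ :=
    exists_dist_lt_of_hausdorffDist_lt (mem_image_of_mem γ ht) hR hfin
  exact ⟨t', ht', hd⟩

end QuasiGeodesics

/-! ### The Morse lemma -/

section MorseLemma

variable {X : Type*} [MetricSpace X]

/-- A geodesic joining two points of a coarsely Lipschitz path is within a distance of the path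
that is logarithmic in the difference of the parameters. -/
lemma log_near (hX : IsGeodesicSpace X) {δ : ℝ} (hδ : Thin X δ)
    {K L a b : ℝ} (hK : 1 ≤ K) {c : ℝ → X}
    (hc : ∀ u ∈ Icc a b, ∀ v ∈ Icc a b, dist (c u) (c v) ≤ K * |u - v| + L) (k : ℕ) :
    ∀ s ∈ Icc a b, ∀ t ∈ Icc a b, |s - t| ≤ 2 ^ k →
      ∀ S, IsGeodesicSegment S (c s) (c t) → ∀ p ∈ S,
        ∃ u ∈ Icc a b, dist p (c u) ≤ δ * k + (K + L) := by
  induction k with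
  | zero =>
    intro s hs t ht hst S hS p hp
    refine ⟨s, hs, ?_⟩
    have h1 := seg_dist_le hS hp
    have h2 := hc s hs t ht
    rw [dist_comm]
    norm_num at hst ⊢
    nlinarith
  | succ k ih =>
    intro s hs t ht hst S hS p hp
    have hm : (s + t) / 2 ∈ Icc a b :=
      ⟨by linarith [hs.1, ht.1], by linarith [hs.2, ht.2]⟩
    have e1 : |s - (s + t) / 2| ≤ 2 ^ k := by
      have : s - (s + t) / 2 = (s - t) / 2 := by ring
      rw [this, abs_div, abs_two]
      rw [pow_succ] at hst
      linarith
    have e2 : |(s + t) / 2 - t| ≤ 2 ^ k := by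
      have : (s + t) / 2 - t = (s - t) / 2 := by ring
      rw [this, abs_div, abs_two]
      rw [pow_succ] at hst
      linarith
    obtain ⟨S₁, hS₁⟩ := exists_seg hX (c s) (c ((s + t) / 2))
    obtain ⟨S₂, hS₂⟩ := exists_seg hX (c ((s + t) / 2)) (c t)
    obtain ⟨q, hq, hpq⟩ := hδ _ _ _ S₁ S₂ S hS₁ hS₂ hS p hp
    have key : ∃ u ∈ Icc a b, dist q (c u) ≤ δ * k + (K + L) := by
      rcases hq with hq | hq
      · exact ih s hs _ hm e1 S₁ hS₁ q hq
      · exact ih _ hm t ht e2 S₂ hS₂ q hq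
    obtain ⟨u, hu, hqu⟩ := key
    refine ⟨u, hu, ?_⟩
    have := dist_triangle p q (c u)
    push_cast
    linarith

lemma sq_le_two_pow (k : ℕ) (hk : 4 ≤ k) : k ^ 2 ≤ 2 ^ k := by
  induction k, hk using Nat.le_induction with
  | base => norm_num
  | succ n hn ih => rw [pow_succ 2]; nlinarith

lemma exists_linear_le_two_pow (α β : ℝ) (hα : 0 ≤ α) (hβ : 0 ≤ β) :
    ∃ k₀ : ℕ, ∀ k : ℕ, k₀ ≤ k → α + β * k ≤ 2 ^ k := by
  obtain ⟨n, hn⟩ := exists_nat_ge (α + β)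
  refine ⟨n + 4, fun k hk => ?_⟩
  have h1 : ((k : ℝ)) ^ 2 ≤ 2 ^ k := by exact_mod_cast sq_le_two_pow k (by omega)
  have h2 : ((n : ℝ)) + 4 ≤ k := by exact_mod_cast hk
  nlinarith

/-- First half of the Morse lemma: a geodesic is uniformly close to any quasi-geodesic with the
same endpoints. -/
lemma geodesic_near_qg (hX : IsGeodesicSpace X) {δ : ℝ} (hδ0 : 0 ≤ δ) (hδ : Thin X δ)
    {K L : ℝ} (hK : 1 ≤ K) (hL : 0 ≤ L) :
    ∃ D : ℝ, 0 ≤ D ∧ ∀ (c : ℝ → X) (a b : ℝ), a ≤ b → QIEmbedOn c (Icc a b) K L →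
      ∀ S, IsGeodesicSegment S (c a) (c b) → ∀ p ∈ S, ∃ u ∈ Icc a b, dist p (c u) ≤ D := by
  obtain ⟨k₀, hk₀⟩ := exists_linear_le_two_pow (K * (6 * (1 + 2 * δ + δ + K + L) + L))
    (K * 6 * δ) (by positivity) (by positivity)
  refine ⟨1 + 2 * δ + δ * k₀ + K + L, by positivity, ?_⟩
  intro c a b hab hc S hS
  obtain ⟨g, hg0, hg1, rfl, hg⟩ := hS
  set d := dist (c a) (c b) with hd
  set P := c '' Icc a b with hP
  have hPne : P.Nonempty := (nonempty_Icc.2 hab).image _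
  have hd0 : 0 ≤ d := dist_nonneg
  obtain ⟨t₀, ht₀, hmax⟩ := isCompact_Icc.exists_isMaxOn (nonempty_Icc.2 hd0)
    ((continuous_infDist_pt P).comp_continuousOn (continuousOn_of_isom hg))
  set E := infDist (g t₀) P + 1 with hE
  have hE1 : 1 ≤ E := by
    have : 0 ≤ infDist (g t₀) P := infDist_nonneg
    linarith
  have hnear : ∀ t ∈ Icc 0 d, ∃ u ∈ Icc a b, dist (g t) (c u) ≤ E := by
    intro t ht
    have h1 : infDist (g t) P ≤ infDist (g t₀) P := hmax ht
    obtain ⟨_, ⟨u, hu, rfl⟩, h2⟩ := (infDist_lt_iff hPne (x := g t) (r := E)).1 (by linarith)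
    exact ⟨u, hu, h2.le⟩
  have hfar : ∀ u ∈ Icc a b, E - 1 ≤ dist (g t₀) (c u) := by
    intro u hu
    have := infDist_le_dist_of_mem (x := g t₀) (mem_image_of_mem c hu)
    linarith
  -- A point `2E` to the left of `g t₀`, or the left endpoint, joined to the path by a segment
  -- staying at distance at least `E - 1` from `g t₀`.
  have hleft : ∃ t₁ ∈ Icc 0 t₀, t₀ - t₁ ≤ 2 * E ∧ ∃ u ∈ Icc a b, dist (g t₁) (c u) ≤ E ∧
      ∀ T, IsGeodesicSegment T (g t₁) (c u) → ∀ q ∈ T, E - 1 ≤ dist (g t₀) q := by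
    by_cases h : t₀ ≤ 2 * E
    · refine ⟨0, ⟨le_rfl, ht₀.1⟩, by linarith, a, ⟨le_rfl, hab⟩, ?_, ?_⟩
      · rw [hg0, dist_self]; linarith
      · intro T hT q hq
        have := seg_dist_le hT hq
        rw [hg0, dist_self] at this
        have : c a = q := dist_le_zero.1 this
        rw [← this]
        exact hfar a ⟨le_rfl, hab⟩
    · push Not at h
      have hm : t₀ - 2 * E ∈ Icc 0 d := ⟨by linarith, by linarith [ht₀.2]⟩
      obtain ⟨u, hu, hu'⟩ := hnear _ hm
      refine ⟨t₀ - 2 * E, ⟨hm.1, by linarith⟩, by linarith, u, hu, hu', ?_⟩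
      intro T hT q hq
      have h1 := seg_dist_le hT hq
      have h2 : dist (g t₀) (g (t₀ - 2 * E)) = 2 * E := by
        rw [hg _ ht₀ _ hm, abs_of_nonneg (by linarith)]; ring
      have h3 := dist_triangle_right (g t₀) (g (t₀ - 2 * E)) q
      linarith
  have hright : ∃ t₂ ∈ Icc t₀ d, t₂ - t₀ ≤ 2 * E ∧ ∃ u ∈ Icc a b, dist (g t₂) (c u) ≤ E ∧
      ∀ T, IsGeodesicSegment T (g t₂) (c u) → ∀ q ∈ T, E - 1 ≤ dist (g t₀) q := by
    by_cases h : d ≤ t₀ + 2 * E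
    · refine ⟨d, ⟨ht₀.2, le_rfl⟩, by linarith, b, ⟨hab, le_rfl⟩, ?_, ?_⟩
      · rw [hg1, dist_self]; linarith
      · intro T hT q hq
        have := seg_dist_le hT hq
        rw [hg1, dist_self] at this
        have : c b = q := dist_le_zero.1 this
        rw [← this]
        exact hfar b ⟨hab, le_rfl⟩
    · push Not at h
      have hm : t₀ + 2 * E ∈ Icc 0 d := ⟨by linarith [ht₀.1], by linarith⟩
      obtain ⟨u, hu, hu'⟩ := hnear _ hm
      refine ⟨t₀ + 2 * E, ⟨by linarith, hm.2⟩, by linarith, u, hu, hu', ?_⟩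
      intro T hT q hq
      have h1 := seg_dist_le hT hq
      have h2 : dist (g t₀) (g (t₀ + 2 * E)) = 2 * E := by
        rw [hg _ ht₀ _ hm, abs_sub_comm, abs_of_nonneg (by linarith)]; ring
      have h3 := dist_triangle_right (g t₀) (g (t₀ + 2 * E)) q
      linarith
  obtain ⟨t₁, ht₁, ht₁E, u₁, hu₁, hyu, hy⟩ := hleft
  obtain ⟨t₂, ht₂, ht₂E, u₂, hu₂, hzu, hz⟩ := hright
  have ht₁' : t₁ ∈ Icc 0 d := ⟨ht₁.1, ht₁.2.trans ht₀.2⟩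
  have ht₂' : t₂ ∈ Icc 0 d := ⟨ht₀.1.trans ht₂.1, ht₂.2⟩
  have hpar : |u₁ - u₂| ≤ K * (6 * E + L) := by
    have h1 := qi_lower hK hc hu₁ hu₂
    have h2 : dist (g t₁) (g t₂) ≤ 4 * E := by
      rw [hg _ ht₁' _ ht₂', abs_sub_comm, abs_of_nonneg (by linarith [ht₁.2, ht₂.1])]
      linarith
    have h4 : dist (c u₁) (c u₂) ≤ 6 * E := by
      have := dist_triangle4 (c u₁) (g t₁) (g t₂) (c u₂)
      rw [dist_comm (c u₁) (g t₁)] at this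
      linarith
    nlinarith
  obtain ⟨T₁, hT₁⟩ := exists_seg hX (g t₁) (c u₁)
  obtain ⟨T₂, hT₂⟩ := exists_seg hX (c u₁) (c u₂)
  obtain ⟨T₃, hT₃⟩ := exists_seg hX (c u₂) (g t₂)
  obtain ⟨T₄, hT₄⟩ := exists_seg hX (c u₁) (g t₂)
  have hS' : IsGeodesicSegment (g '' Icc t₁ t₂) (g t₁) (g t₂) :=
    seg_sub (ht₁.2.trans ht₂.1) fun s hs t ht =>
      hg s ⟨ht₁.1.trans hs.1, hs.2.trans ht₂.2⟩ t ⟨ht₁.1.trans ht.1, ht.2.trans ht₂.2⟩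
  -- Thinness of the quadrilateral, combined with the logarithmic estimate.
  have hstep : ∀ k : ℕ, K * (6 * E + L) ≤ 2 ^ k → E ≤ 1 + 2 * δ + δ * k + K + L := by
    intro k hk
    have hδk : 0 ≤ δ * k := by positivity
    obtain ⟨q, hq, hpq⟩ := hδ _ _ _ T₁ T₄ _ hT₁ hT₄ hS' (g t₀)
      (mem_image_of_mem g ⟨ht₁.2, ht₂.1⟩)
    rcases hq with hq | hq
    · have := hy T₁ hT₁ q hq
      linarith
    · obtain ⟨q', hq', hqq'⟩ := hδ _ _ _ T₂ T₃ _ hT₂ hT₃ hT₄ q hq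
      have htri := dist_triangle (g t₀) q q'
      rcases hq' with hq' | hq'
      · obtain ⟨u, hu, hqu⟩ := log_near hX hδ hK (fun u hu v hv => (hc u hu v hv).2) k
          u₁ hu₁ u₂ hu₂ (hpar.trans hk) T₂ hT₂ q' hq'
        have h1 := hfar u hu
        have h2 := dist_triangle (g t₀) q' (c u)
        linarith
      · have := hz T₃ (seg_symm hT₃) q' hq'
        linarith
  -- By the choice of `k₀`, the bound on `E` given by `k + 1` makes `hstep` applicable to `k`,
  -- as long as `k₀ ≤ k`; so `k` can be lowered to `k₀`.
  have hdesc : ∀ n : ℕ, E ≤ 1 + 2 * δ + δ * ((k₀ + n : ℕ) : ℝ) + K + L →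
      E ≤ 1 + 2 * δ + δ * k₀ + K + L := by
    intro n
    induction n with
    | zero => exact fun h => h
    | succ n ih =>
      intro h
      refine ih (hstep _ (le_trans ?_ (hk₀ (k₀ + n) (by omega))))
      push_cast at h ⊢
      have : K * (6 * E + L) ≤ K * (6 * (1 + 2 * δ + δ * (k₀ + (n + 1)) + K + L) + L) := by
        gcongr
      linarith
  have hEb : E ≤ 1 + 2 * δ + δ * k₀ + K + L := by
    obtain ⟨k, hk⟩ := pow_unbounded_of_one_lt (K * (6 * E + L)) (one_lt_two (α := ℝ))
    have h1 := hstep k hk.le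
    refine hdesc k (h1.trans ?_)
    push_cast
    have : 0 ≤ δ * (k₀ : ℝ) := by positivity
    linarith
  rintro _ ⟨t, ht, rfl⟩
  obtain ⟨u, hu, h⟩ := hnear t ht
  exact ⟨u, hu, h.trans hEb⟩

/-- Second half of the Morse lemma: a quasi-geodesic is uniformly close to any geodesic with the
same endpoints. -/
lemma qg_near_geodesic (hX : IsGeodesicSpace X) {δ : ℝ} (hδ0 : 0 ≤ δ) (hδ : Thin X δ)
    {K L : ℝ} (hK : 1 ≤ K) (hL : 0 ≤ L) :
    ∃ D : ℝ, 0 ≤ D ∧ ∀ (c : ℝ → X) (a b : ℝ), a ≤ b → QIEmbedOn c (Icc a b) K L →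
      ∀ S, IsGeodesicSegment S (c a) (c b) → ∀ u ∈ Icc a b, ∃ p ∈ S, dist (c u) p ≤ D := by
  obtain ⟨D, hD0, hD⟩ := geodesic_near_qg hX hδ0 hδ hK hL
  refine ⟨K * (K * (2 * (D + 1) + L)) + L + (D + 1), by positivity, ?_⟩
  intro c a b hab hc S hS u hu
  have hnear := hD c a b hab hc S hS
  obtain ⟨g, hg0, hg1, rfl, hg⟩ := hS
  set d := dist (c a) (c b) with hd
  have hd0 : 0 ≤ d := dist_nonneg
  have hgc := continuousOn_of_isom hg
  have hc1 : ContinuousOn (fun t => infDist (g t) (c '' Icc a u)) (Icc 0 d) :=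
    (continuous_infDist_pt _).comp_continuousOn hgc
  have hc2 : ContinuousOn (fun t => infDist (g t) (c '' Icc u b)) (Icc 0 d) :=
    (continuous_infDist_pt _).comp_continuousOn hgc
  have hne1 : (c '' Icc a u).Nonempty := (nonempty_Icc.2 hu.1).image _
  have hne2 : (c '' Icc u b).Nonempty := (nonempty_Icc.2 hu.2).image _
  have hz1 : infDist (g 0) (c '' Icc a u) = 0 := by
    rw [hg0]; exact infDist_zero_of_mem (mem_image_of_mem c ⟨le_rfl, hu.1⟩)
  have hz2 : infDist (g d) (c '' Icc u b) = 0 := by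
    rw [hg1]; exact infDist_zero_of_mem (mem_image_of_mem c ⟨hu.2, le_rfl⟩)
  -- The difference of the distances to the two halves of the path changes sign on `[0, d]`.
  obtain ⟨t, ht, hteq⟩ : ∃ t ∈ Icc 0 d,
      infDist (g t) (c '' Icc a u) - infDist (g t) (c '' Icc u b) = 0 := by
    have := intermediate_value_Icc hd0 (hc1.sub hc2)
    refine this ⟨?_, ?_⟩
    · have : 0 ≤ infDist (g 0) (c '' Icc u b) := infDist_nonneg
      simp only [Pi.sub_apply, hz1]
      linarith
    · have : 0 ≤ infDist (g d) (c '' Icc a u) := infDist_nonneg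
      simp only [Pi.sub_apply, hz2]
      linarith
  obtain ⟨v, hv, hvD⟩ := hnear (g t) (mem_image_of_mem g ht)
  have hboth : infDist (g t) (c '' Icc a u) ≤ D ∧ infDist (g t) (c '' Icc u b) ≤ D := by
    rcases le_total v u with h | h
    · have := infDist_le_dist_of_mem (x := g t) (mem_image_of_mem c (mem_Icc.2 ⟨hv.1, h⟩))
      constructor <;> linarith
    · have := infDist_le_dist_of_mem (x := g t) (mem_image_of_mem c (mem_Icc.2 ⟨h, hv.2⟩))
      constructor <;> linarith
  obtain ⟨_, ⟨r, hr, rfl⟩, hrD⟩ := (infDist_lt_iff hne1 (x := g t) (r := D + 1)).1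
    (by linarith [hboth.1])
  obtain ⟨_, ⟨s, hs, rfl⟩, hsD⟩ := (infDist_lt_iff hne2 (x := g t) (r := D + 1)).1
    (by linarith [hboth.2])
  have hr' : r ∈ Icc a b := ⟨hr.1, hr.2.trans hu.2⟩
  have hs' : s ∈ Icc a b := ⟨hu.1.trans hs.1, hs.2⟩
  have h1 : dist (c r) (c s) ≤ 2 * (D + 1) := by
    have := dist_triangle_left (c r) (c s) (g t)
    linarith
  have h2 := qi_lower hK hc hr' hs'
  have h3 : |u - r| ≤ |r - s| := by
    rw [abs_sub_comm r s, abs_of_nonneg (by linarith [hr.2]),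
      abs_of_nonneg (by linarith [hr.2, hs.1])]
    linarith [hs.1]
  have h4 := (hc u hu r hr').2
  have h5 : |u - r| ≤ K * (2 * (D + 1) + L) := by
    refine h3.trans (h2.trans ?_)
    gcongr
  have h6 : K * |u - r| ≤ K * (K * (2 * (D + 1) + L)) := by gcongr
  refine ⟨g t, mem_image_of_mem g ht, ?_⟩
  have h7 := dist_triangle_right (c u) (g t) (c r)
  linarith

end MorseLemma

/-! ### Projecting quasi-geodesics to `A` -/

section Projection

variable {A X : Type*} [MetricSpace A] [MetricSpace X]

lemma dist_le_of_qi {Φ : A → X} {K₀ L₀ : ℝ} (hΦ : QIEmbeddingWith Φ K₀ L₀) (x y : A) :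
    dist x y ≤ K₀ * (dist (Φ x) (Φ y) + L₀) := by
  obtain ⟨hK, hL, h⟩ := hΦ
  have h1 := (h x y).1
  have hK0 : 0 < K₀ := by linarith
  have h2 : 1 / K₀ * dist x y ≤ dist (Φ x) (Φ y) + L₀ := by linarith
  have h3 := mul_le_mul_of_nonneg_left h2 hK0.le
  have h4 : K₀ * (1 / K₀ * dist x y) = dist x y := by field_simp
  linarith

/-- A map that moves points by at most `M` into `Φ(A)` turns quasi-geodesics of `X` into
quasi-geodesics of `A`. -/
lemma qi_proj {Φ : A → X} {K₀ L₀ K L M : ℝ} (hΦ : QIEmbeddingWith Φ K₀ L₀)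
    (hL : 0 ≤ L) (hM : 0 ≤ M) {γ : ℝ → X} {s : Set ℝ} (h : QIEmbedOn γ s K L) {π : X → A}
    (hπ : ∀ t ∈ s, dist (γ t) (Φ (π (γ t))) ≤ M) :
    QIEmbedOn (π ∘ γ) s (K₀ * K) (K₀ * (L + 2 * M + L₀)) := by
  have hΦ' := hΦ
  obtain ⟨hK0, hL0, hΦ⟩ := hΦ
  intro u hu v hv
  obtain ⟨h1, h2⟩ := h u hu v hv
  have h3 := (hΦ (π (γ u)) (π (γ v))).2
  have h4 := dist_le_of_qi hΦ' (π (γ u)) (π (γ v))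
  have h5 := hπ u hu
  have h6 := hπ v hv
  have h7 := dist_triangle4 (γ u) (Φ (π (γ u))) (Φ (π (γ v))) (γ v)
  have h8 := dist_triangle4 (Φ (π (γ u))) (γ u) (γ v) (Φ (π (γ v)))
  rw [dist_comm (Φ (π (γ v))) (γ v)] at h7
  rw [dist_comm (Φ (π (γ u))) (γ u)] at h8
  simp only [Function.comp]
  have hpos : 0 < K₀ := by linarith
  constructor
  · have h9 : 1 / K * |u - v| ≤ K₀ * dist (π (γ u)) (π (γ v)) + (L + 2 * M + L₀) := by linarith
    have h10 := mul_le_mul_of_nonneg_left h9 (one_div_nonneg.2 hpos.le)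
    have h11 : 1 / K₀ * (K₀ * dist (π (γ u)) (π (γ v)) + (L + 2 * M + L₀))
        = dist (π (γ u)) (π (γ v)) + 1 / K₀ * (L + 2 * M + L₀) := by field_simp
    have h12 : 1 / (K₀ * K) * |u - v| = 1 / K₀ * (1 / K * |u - v|) := by
      rw [one_div, one_div, one_div, mul_inv, mul_assoc]
    have h13 : 1 / K₀ ≤ K₀ := by
      have : 1 / K₀ ≤ 1 := by rw [div_le_one hpos]; exact hK0
      linarith
    have h14 : 1 / K₀ * (L + 2 * M + L₀) ≤ K₀ * (L + 2 * M + L₀) := by gcongr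
    linarith
  · have h9 : K₀ * (dist (Φ (π (γ u))) (Φ (π (γ v))) + L₀)
        ≤ K₀ * (K * |u - v| + L + 2 * M + L₀) := by
      gcongr
      linarith
    linarith

end Projection

/-! ### Stability implies thin triangles -/

section ThinTriangles

variable {A X : Type*} [MetricSpace A] [MetricSpace X]

/-- If `w = g 0 = h d` is a point of the geodesic `g` closest to `h 0`, then the geodesic `h`
followed by `g` is a `(3, 0)`-quasi-geodesic. -/
lemma qi_concat {g h : ℝ → A} {d e : ℝ} (hd : 0 ≤ d) (he : 0 ≤ e)
    (hh : ∀ u ∈ Icc 0 d, ∀ v ∈ Icc 0 d, dist (h u) (h v) = |u - v|)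
    (hg : ∀ u ∈ Icc 0 e, ∀ v ∈ Icc 0 e, dist (g u) (g v) = |u - v|)
    (hw : h d = g 0) (hmin : ∀ u ∈ Icc 0 e, d ≤ dist (h 0) (g u)) :
    QIEmbedOn (fun t => if t ≤ d then h t else g (t - d)) (Icc 0 (d + e)) 3 0 := by
  have key : ∀ u v : ℝ, u ∈ Icc 0 d → v ∈ Icc d (d + e) →
      1 / 3 * (v - u) ≤ dist (h u) (g (v - d)) ∧ dist (h u) (g (v - d)) ≤ v - u := by
    intro u v hu hv
    have hv' : v - d ∈ Icc 0 e := ⟨by linarith [hv.1], by linarith [hv.2]⟩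
    have h1 : dist (h u) (h d) = d - u := by
      rw [hh u hu d ⟨hd, le_rfl⟩, abs_sub_comm, abs_of_nonneg (by linarith [hu.2])]
    have h2 : dist (g 0) (g (v - d)) = v - d := by
      rw [hg 0 ⟨le_rfl, he⟩ _ hv', abs_sub_comm, sub_zero, abs_of_nonneg hv'.1]
    have h3 : dist (h 0) (h u) = u := by
      rw [hh 0 ⟨le_rfl, hd⟩ u hu, abs_sub_comm, sub_zero, abs_of_nonneg hu.1]
    have h4 := hmin _ hv'
    have h5 := dist_triangle (h 0) (h u) (g (v - d))
    rw [hw] at h1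
    have h6 := dist_triangle_left (g 0) (g (v - d)) (h u)
    have h7 := dist_triangle (h u) (g 0) (g (v - d))
    constructor <;> linarith
  have main : ∀ u ∈ Icc 0 (d + e), ∀ v ∈ Icc 0 (d + e), u ≤ v →
      1 / 3 * (v - u) ≤ dist (if u ≤ d then h u else g (u - d))
        (if v ≤ d then h v else g (v - d)) ∧
      dist (if u ≤ d then h u else g (u - d)) (if v ≤ d then h v else g (v - d)) ≤ v - u := by
    intro u hu v hv huv
    by_cases h1 : v ≤ d
    · have h2 : u ≤ d := huv.trans h1
      rw [if_pos h1, if_pos h2, hh u ⟨hu.1, h2⟩ v ⟨hv.1, h1⟩, abs_sub_comm,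
        abs_of_nonneg (by linarith)]
      constructor <;> linarith
    · push Not at h1
      rw [if_neg (not_le.2 h1)]
      by_cases h2 : u ≤ d
      · rw [if_pos h2]
        exact key u v ⟨hu.1, h2⟩ ⟨h1.le, hv.2⟩
      · push Not at h2
        rw [if_neg (not_le.2 h2), hg _ ⟨by linarith, by linarith [hu.2]⟩ _
          ⟨by linarith, by linarith [hv.2]⟩, abs_sub_comm, abs_of_nonneg (by linarith)]
        constructor <;> linarith
  intro u hu v hv
  rcases le_total u v with h1 | h1
  · have := main u hu v hv h1
    rw [abs_sub_comm, abs_of_nonneg (by linarith : 0 ≤ v - u)]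
    constructor
    · linarith [this.1]
    · linarith [this.2]
  · have := main v hv u hu h1
    rw [abs_of_nonneg (by linarith : 0 ≤ u - v)]
    simp only [dist_comm (if u ≤ d then h u else g (u - d))]
    constructor
    · linarith [this.1]
    · linarith [this.2]

/-- If `w` is a point of a geodesic `[w, x]` closest to `y`, then stability forces `[w, x]` to be
uniformly close to `[y, x]`. -/
lemma near_of_closest (hA : IsGeodesicSpace A) {Φ : A → X} (hΦ : IsQIEmbedding Φ)
    (hst : IsStableSubset (Set.range Φ)) :
    ∃ R : ℝ, 0 ≤ R ∧ ∀ (x y w : A) (S T : Set A), IsGeodesicSegment S w x →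
      IsGeodesicSegment T y x → (∀ v ∈ S, dist y w ≤ dist y v) →
      ∀ p ∈ S, ∃ q ∈ T, dist p q ≤ R := by
  obtain ⟨K₀, L₀, hΦ⟩ := hΦ
  have hK0 := hΦ.1
  have hL0 := hΦ.2.1
  obtain ⟨R, hR0, hR⟩ := hst (K₀ * 3) L₀ (by linarith) hL0
  refine ⟨K₀ * (R + L₀), by positivity, ?_⟩
  rintro x y w S T ⟨g, hg0, hg1, rfl, hg⟩ ⟨f, hf0, hf1, rfl, hf⟩ hmin p ⟨t, ht, rfl⟩
  obtain ⟨h, hh0, hh1, hh⟩ := hA y w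
  have hd : 0 ≤ dist y w := dist_nonneg
  have he : 0 ≤ dist w x := dist_nonneg
  have hq1 := qi_comp hΦ (qi_concat hd he hh hg (hh1.trans hg0.symm)
    (fun u hu => by rw [hh0]; exact hmin _ (mem_image_of_mem g hu)))
  have hq2 := qi_comp hΦ (qi_mono le_rfl (by norm_num : (1 : ℝ) ≤ 3) le_rfl
    (qi_of_isom hf))
  set β : ℝ → A := fun t => if t ≤ dist y w then h t else g (t - dist y w) with hβ
  have hβ0 : β 0 = y := by simp only [hβ, if_pos hd, hh0]
  -- At the parameter `dist y w` both branches of `β` agree.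
  have hβg : ∀ s, 0 ≤ s → β (dist y w + s) = g s := by
    intro s hs
    rcases hs.eq_or_lt with rfl | hs
    · simp only [hβ, add_zero, le_refl, if_true, hh1, hg0]
    · simp only [hβ]
      rw [if_neg (by linarith)]
      congr 1
      ring
  have hβ1 : β (dist y w + dist w x) = x := by rw [hβg _ he, hg1]
  have hlt := hR (Φ ∘ β) (Φ ∘ f) 0 (dist y w + dist w x) 0 (dist y x) (by linarith) dist_nonneg
    hq1 hq2 (by simp [hβ0, hf0]) (by simp [hβ1, hf1]) ⟨_, rfl⟩ ⟨_, rfl⟩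
  obtain ⟨t', ht', hdist⟩ := exists_near_of_hausdorff (by linarith) (by linarith) dist_nonneg
    hq1 hq2 hlt (t := dist y w + t) ⟨by linarith [ht.1], by linarith [ht.2]⟩
  refine ⟨f t', mem_image_of_mem f ht', ?_⟩
  simp only [Function.comp, hβg t ht.1] at hdist
  refine (dist_le_of_qi hΦ _ _).trans ?_
  gcongr

lemma hyperbolic_of_stable (hA : IsGeodesicSpace A) {Φ : A → X} (hΦ : IsQIEmbedding Φ)
    (hst : IsStableSubset (Set.range Φ)) : IsHyperbolic A := by
  obtain ⟨R, hR0, hR⟩ := near_of_closest hA hΦ hst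
  refine ⟨R, hR0, ?_⟩
  rintro x y z S₁ S₂ S₃ h₁ h₂ ⟨g, hg0, hg1, rfl, hg⟩ p ⟨t, ht, rfl⟩
  have hd : 0 ≤ dist x z := dist_nonneg
  obtain ⟨t₀, ht₀, hmin⟩ := isCompact_Icc.exists_isMinOn (nonempty_Icc.2 hd)
    ((continuous_const.dist continuous_id).comp_continuousOn (continuousOn_of_isom hg) :
      ContinuousOn (fun t => dist y (g t)) (Icc 0 (dist x z)))
  have hmin' : ∀ s ∈ Icc 0 (dist x z), dist y (g t₀) ≤ dist y (g s) := fun s hs => hmin hs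
  have hxw : IsGeodesicSegment (g '' Icc 0 t₀) (g 0) (g t₀) :=
    seg_sub ht₀.1 fun s hs t ht => hg s ⟨hs.1, hs.2.trans ht₀.2⟩ t ⟨ht.1, ht.2.trans ht₀.2⟩
  have hwz : IsGeodesicSegment (g '' Icc t₀ (dist x z)) (g t₀) (g (dist x z)) :=
    seg_sub ht₀.2 fun s hs t ht => hg s ⟨ht₀.1.trans hs.1, hs.2⟩ t ⟨ht₀.1.trans ht.1, ht.2⟩
  rw [hg0] at hxw
  rw [hg1] at hwz
  rcases le_total t t₀ with h | h
  · obtain ⟨q, hq, hpq⟩ := hR x y (g t₀) _ S₁ (seg_symm hxw) (seg_symm h₁)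
      (by rintro _ ⟨s, hs, rfl⟩; exact hmin' s ⟨hs.1, hs.2.trans ht₀.2⟩) (g t)
      (mem_image_of_mem g ⟨ht.1, h⟩)
    exact (infDist_le_dist_of_mem (mem_union_left _ hq)).trans hpq
  · obtain ⟨q, hq, hpq⟩ := hR z y (g t₀) _ S₂ hwz h₂
      (by rintro _ ⟨s, hs, rfl⟩; exact hmin' s ⟨ht₀.1.trans hs.1, hs.2⟩) (g t)
      (mem_image_of_mem g ⟨h, ht.2⟩)
    exact (infDist_le_dist_of_mem (mem_union_right _ hq)).trans hpq

end ThinTriangles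

/-! ### The two directions -/

section Directions

variable {A X : Type*} [MetricSpace A] [MetricSpace X]

lemma morse_of_stable (hA : IsGeodesicSpace A) {Φ : A → X} (hΦ : IsQIEmbedding Φ)
    (hst : IsStableSubset (Set.range Φ)) : IsMorse (Set.range Φ) := by
  obtain ⟨K₀, L₀, hΦ⟩ := hΦ
  have hK0 := hΦ.1
  intro K C hK hC
  obtain ⟨R, hR0, hR⟩ := hst (max K K₀) (max C L₀) (le_max_of_le_left hK) (le_max_of_le_left hC)
  refine ⟨R, hR0, ?_⟩
  rintro γ a b hab hγ ⟨p, hp⟩ ⟨q, hq⟩ t ht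
  obtain ⟨α, hα0, hα1, hα⟩ := hA p q
  have h1 := qi_mono hK (le_max_left K K₀) (le_max_left C L₀) hγ
  have h2 := qi_comp hΦ (qi_of_isom hα)
  rw [mul_one] at h2
  have h3 := qi_mono hK0 (le_max_right K K₀) (le_max_right C L₀) h2
  have hlt := hR γ (Φ ∘ α) a b 0 (dist p q) hab dist_nonneg h1 h3 (by simp [hα0, hp])
    (by simp [hα1, hq]) ⟨p, hp⟩ ⟨q, hq⟩
  obtain ⟨t', -, h4⟩ := exists_near_of_hausdorff (le_max_of_le_left hK) hab dist_nonneg h1 h3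
    hlt ht
  exact (infDist_le_dist_of_mem (mem_range_self _)).trans h4.le

lemma stable_of_morse_of_hyperbolic (hA : IsGeodesicSpace A) {Φ : A → X} (hΦ : IsQIEmbedding Φ)
    (hM : IsMorse (Set.range Φ)) (hh : IsHyperbolic A) : IsStableSubset (Set.range Φ) := by
  obtain ⟨K₀, L₀, hΦ⟩ := hΦ
  have hK0 := hΦ.1
  have hL0 := hΦ.2.1
  obtain ⟨δ, hδ0, hδ⟩ := exists_thin hh
  intro K L hK hL
  obtain ⟨M, hM0, hM⟩ := hM K L hK hL
  have hK1 : 1 ≤ K₀ * K := by nlinarith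
  have hL1 : 0 ≤ K₀ * (L + 2 * (M + 1) + L₀) := by positivity
  obtain ⟨D₁, hD₁0, hD₁⟩ := geodesic_near_qg hA hδ0 hδ hK1 hL1
  obtain ⟨D₂, hD₂0, hD₂⟩ := qg_near_geodesic hA hδ0 hδ hK1 hL1
  set R := (M + 1) + (K₀ * (D₂ + D₁) + L₀) + (M + 1) with hRdef
  have hR0 : 0 ≤ R := by positivity
  refine ⟨R + 1, by linarith, ?_⟩
  intro γ γ' a b a' b' hab hab' hγ hγ' ha hb haA hbA
  -- Since `π` is a function, `π ∘ γ` and `π ∘ γ'` have the same endpoints.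
  have hproj : ∀ x : X, ∃ y : A, dist x (Φ y) ≤ infDist x (Set.range Φ) + 1 := by
    intro x
    obtain ⟨_, ⟨y, rfl⟩, hy⟩ := (infDist_lt_iff (s := Set.range Φ) (x := x)
      (r := infDist x (Set.range Φ) + 1) ⟨_, haA⟩).1 (by linarith)
    exact ⟨y, hy.le⟩
  choose π hπ using hproj
  have hγπ : ∀ t ∈ Icc a b, dist (γ t) (Φ (π (γ t))) ≤ M + 1 := fun t ht =>
    (hπ _).trans (by linarith [hM γ a b hab hγ haA hbA t ht])
  have hγ'π : ∀ t ∈ Icc a' b', dist (γ' t) (Φ (π (γ' t))) ≤ M + 1 := fun t ht =>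
    (hπ _).trans (by linarith [hM γ' a' b' hab' hγ' (ha ▸ haA) (hb ▸ hbA) t ht])
  have hM1 : 0 ≤ M + 1 := by linarith
  have hq := qi_proj hΦ hL hM1 hγ hγπ
  have hq' := qi_proj hΦ hL hM1 hγ' hγ'π
  obtain ⟨S, hS⟩ := exists_seg hA (π (γ a)) (π (γ b))
  have hS' : IsGeodesicSegment S (π (γ' a')) (π (γ' b')) := by rwa [← ha, ← hb]
  have conc : ∀ {x y : X} {p : A}, dist x (Φ (π x)) ≤ M + 1 → dist y (Φ (π y)) ≤ M + 1 →
      dist (π x) p ≤ D₂ → dist p (π y) ≤ D₁ → dist x y ≤ R := by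
    intro x y p hx hy hxp hpy
    have h1 := dist_triangle (π x) p (π y)
    have h2 := (hΦ.2.2 (π x) (π y)).2
    have h3 := dist_triangle4 x (Φ (π x)) (Φ (π y)) y
    rw [dist_comm (Φ (π y)) y] at h3
    have h4 : K₀ * dist (π x) (π y) ≤ K₀ * (D₂ + D₁) := by
      gcongr
      linarith
    linarith
  refine lt_of_le_of_lt (hausdorffDist_le_of_mem_dist hR0 ?_ ?_) (lt_add_one R)
  · rintro _ ⟨t, ht, rfl⟩
    obtain ⟨p, hp, hp'⟩ := hD₂ _ a b hab hq S hS t ht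
    obtain ⟨t', ht', hpt⟩ := hD₁ _ a' b' hab' hq' S hS' p hp
    exact ⟨γ' t', mem_image_of_mem _ ht', conc (hγπ t ht) (hγ'π t' ht') hp' hpt⟩
  · rintro _ ⟨t, ht, rfl⟩
    obtain ⟨p, hp, hp'⟩ := hD₂ _ a' b' hab' hq' S hS' t ht
    obtain ⟨t', ht', hpt⟩ := hD₁ _ a b hab hq S hS p hp
    exact ⟨γ t', mem_image_of_mem _ ht', conc (hγ'π t ht) (hγπ t' ht') hp' hpt⟩

end Directions

end StableMorse

/-! ### The equivalence -/

/-- A quasi-isometrically embedded subspace `Φ : A → X` of a geodesic space is stable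
iff its image is Morse (strongly quasiconvex) and `A` is hyperbolic. -/
theorem stable_iff_morse_and_hyperbolic
    {A X : Type*} [MetricSpace A] [MetricSpace X]
    (hA : IsGeodesicSpace A) (hX : IsGeodesicSpace X)
    (Φ : A → X) (hΦ : IsQIEmbedding Φ) :
    IsStableSubset (Set.range Φ) ↔ (IsMorse (Set.range Φ) ∧ IsHyperbolic A) := by
  exact ⟨fun h => ⟨StableMorse.morse_of_stable hA hΦ h, StableMorse.hyperbolic_of_stable hA hΦ h⟩,
    fun h => StableMorse.stable_of_morse_of_hyperbolic hA hΦ h.1 h.2⟩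
end
end
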